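/- Let 2 ≤ p < N < 2p, let Ω ⊂ ℝ^N be a bounded domain, 0 < λ < λ_1, and suppose the regular part H_λ(·,x_0) = G_λ(·,x_0) − Γ(·,x_0) of the Green function satisfies H_λ(x_0,x_0) > 0, is bounded, and is α-Hölder continuous at x_0 for some α ∈ (0,1). Then, given that PU_{ε,x_0} = U_{ε,x_0} + (C_1/C_0) ε^{(N−p)/p} H_λ(·,x_0) + o(ε^{(N−p)/p}) uniformly in Ω, one has the energy expansion Q_λ(PU_{ε,x_0}) = S_0 − (p−1) S_0^{(p−N)/p} (∫_{ℝ^N} U_1^{p*−1}) (C_1/C_0) ε^{N−p} H_λ(x_0,x_0) + o(ε^{N−p}) as ε → 0, and consequently S_λ < S_0. -/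

import Mathlib

open MeasureTheory Real Filter

noncomputable section

/-- Divergence of a vector field on `ℝ^N`. -/
def vdiv {N : ℕ} (F : EuclideanSpace ℝ (Fin N) → EuclideanSpace ℝ (Fin N))
    (x : EuclideanSpace ℝ (Fin N)) : ℝ :=
  ∑ i, fderiv ℝ F x (EuclideanSpace.single i 1) i

/-- The `p`-Laplace operator `Δ_p u = div(|∇u|^{p-2} ∇u)`. -/
def pLap {N : ℕ} (p : ℝ) (u : EuclideanSpace ℝ (Fin N) → ℝ)
    (x : EuclideanSpace ℝ (Fin N)) : ℝ :=
  vdiv (fun y => ‖gradient u y‖ ^ (p - 2) • gradient u y) x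

/-- Test functions: smooth, compactly supported inside `Ω`
(their `W^{1,p}`-closure is `W_0^{1,p}(Ω)`). -/
def TestOn {N : ℕ} (Ω : Set (EuclideanSpace ℝ (Fin N)))
    (u : EuclideanSpace ℝ (Fin N) → ℝ) : Prop :=
  ContDiff ℝ (⊤ : ℕ∞) u ∧ HasCompactSupport u ∧ tsupport u ⊆ Ω

/-- The Rayleigh quotient `Q_λ(u)` of the Brezis–Nirenberg problem,
with `p^* = Np/(N-p)`. -/
def Qfun {N : ℕ} (Ω : Set (EuclideanSpace ℝ (Fin N))) (p lam : ℝ)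
    (u : EuclideanSpace ℝ (Fin N) → ℝ) : ℝ :=
  ((∫ x in Ω, ‖gradient u x‖ ^ p) - lam * ∫ x in Ω, |u x| ^ p) /
    (∫ x in Ω, |u x| ^ ((N : ℝ) * p / ((N : ℝ) - p))) ^ (p / ((N : ℝ) * p / ((N : ℝ) - p)))

/-- The first eigenvalue `λ₁` of `-Δ_p` on `Ω`. -/
def lamOne {N : ℕ} (Ω : Set (EuclideanSpace ℝ (Fin N))) (p : ℝ) : ℝ :=
  sInf {r : ℝ | ∃ u, TestOn Ω u ∧ u ≠ 0 ∧
    r = (∫ x in Ω, ‖gradient u x‖ ^ p) / ∫ x in Ω, |u x| ^ p}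

/-- `S_λ = inf Q_λ` over `W_0^{1,p}(Ω) \ {0}`. -/
def Sfun {N : ℕ} (Ω : Set (EuclideanSpace ℝ (Fin N))) (p lam : ℝ) : ℝ :=
  sInf {r : ℝ | ∃ u, TestOn Ω u ∧ u ≠ 0 ∧ r = Qfun Ω p lam u}

open Asymptotics Topology

/-- The standard bubble `U_{ε,x₀}` with `C₁ = N^{(N-p)/p²}((N-p)/(p-1))^{(p-1)(N-p)/p²}`. -/
def bubble {N : ℕ} (p ε : ℝ) (x₀ x : EuclideanSpace ℝ (Fin N)) : ℝ :=
  (N : ℝ) ^ (((N : ℝ) - p) / p ^ 2) *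
      (((N : ℝ) - p) / (p - 1)) ^ ((p - 1) * ((N : ℝ) - p) / p ^ 2) *
    (ε / (ε ^ p + ‖x - x₀‖ ^ (p / (p - 1)))) ^ (((N : ℝ) - p) / p)

/-- `C₀`, the constant of the fundamental solution. -/
def Czero (N : ℕ) (p : ℝ) : ℝ :=
  ((p - 1) / ((N : ℝ) - p)) *
    ((N : ℝ) * (volume (Metric.ball (0 : EuclideanSpace ℝ (Fin N)) 1)).toReal)
      ^ (-(1 / (p - 1)))

/-- `C₁`, the constant of the standard bubble. -/
def Cone (N : ℕ) (p : ℝ) : ℝ :=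
  (N : ℝ) ^ (((N : ℝ) - p) / p ^ 2) *
    (((N : ℝ) - p) / (p - 1)) ^ ((p - 1) * ((N : ℝ) - p) / p ^ 2)

lemma vdiv_integral_zero {n : ℕ} (F : EuclideanSpace ℝ (Fin (n+1)) → EuclideanSpace ℝ (Fin (n+1)))
    (hF : Differentiable ℝ F) (hc : HasCompactSupport F) (hi : Integrable (vdiv F)) :
    ∫ x, vdiv F x = 0 := by
  obtain ⟨R, hR⟩ := hc.isCompact.isBounded.subset_closedBall 0
  have hzero : ∀ x, R < ‖x‖ → F x = 0 := by
    intro x hx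
    by_contra h
    have := hR (subset_tsupport F h)
    simp at this; linarith
  have hvz : ∀ x, R < ‖x‖ → vdiv F x = 0 := by
    intro x hx
    have : fderiv ℝ F x = 0 := by
      have : F =ᶠ[𝓝 x] fun _ => 0 := by
        have : {y : EuclideanSpace ℝ (Fin (n+1)) | R < ‖y‖} ∈ 𝓝 x :=
          (isOpen_lt continuous_const continuous_norm).mem_nhds hx
        filter_upwards [this] with y hy using hzero y hy
      rw [this.fderiv_eq]; simp
    simp [vdiv, this]
  set T : ℝ := max R 0 + 1
  have hT : R < T := by simp only [T]; have := le_max_left R 0; linarith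
  have hT0 : 0 < T := by simp only [T]; have := le_max_right R 0; linarith
  have hcoord : ∀ (y : Fin (n+1) → ℝ) (i), |y i| ≤ ‖(WithLp.toLp 2 y : EuclideanSpace ℝ (Fin (n+1)))‖ := by
    intro y i
    have := PiLp.norm_apply_le (WithLp.toLp 2 y : EuclideanSpace ℝ (Fin (n+1))) i
    simpa using this
  let L : (Fin (n+1) → ℝ) ≃L[ℝ] EuclideanSpace ℝ (Fin (n+1)) :=
    (PiLp.continuousLinearEquiv 2 ℝ (fun _ : Fin (n+1) => ℝ)).symm
  have hL : ∀ y, L y = WithLp.toLp 2 y := fun y => rfl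
  have hmp := PiLp.volume_preserving_toLp (Fin (n+1))
  have key := integral_divergence_of_hasFDerivAt_off_countable (fun _ : Fin (n+1) => -T) (fun _ => T)
    (fun i => by linarith) (fun y i => F (L y) i)
    (fun y => (L.symm : EuclideanSpace ℝ (Fin (n+1)) →L[ℝ] (Fin (n+1) → ℝ)).comp
      ((fderiv ℝ F (L y)).comp (L : (Fin (n+1) → ℝ) →L[ℝ] EuclideanSpace ℝ (Fin (n+1)))))
    ∅ Set.countable_empty (by
      apply Continuous.continuousOn
      have h1 : Continuous (fun y => F (L y)) := hF.continuous.comp L.continuous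
      exact (L.symm.continuous.comp h1))
    (by
      intro y _
      have h1 := ((hF (L y)).hasFDerivAt).comp y (L.hasFDerivAt (x := y))
      exact (L.symm.hasFDerivAt).comp y h1)
    (by
      have h2 : Integrable (fun y => vdiv F (WithLp.toLp 2 y)) := hmp.integrable_comp_of_integrable hi
      exact h2.integrableOn)
  have e1 : ∫ x, vdiv F x = ∫ y, vdiv F (WithLp.toLp 2 y) :=
    (hmp.integral_comp (MeasurableEquiv.toLp 2 _).measurableEmbedding _).symm
  rw [e1]
  have e2 : ∫ y, vdiv F (WithLp.toLp 2 y) = ∫ y in Set.Icc (fun _ : Fin (n+1) => -T) (fun _ => T), vdiv F (WithLp.toLp 2 y) := by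
    symm
    apply setIntegral_eq_integral_of_forall_compl_eq_zero
    intro y hy
    apply hvz
    by_contra hcon
    push Not at hcon
    apply hy
    constructor
    · intro i; have := hcoord y i; rw [abs_le] at this; linarith
    · intro i; have := hcoord y i; rw [abs_le] at this; linarith
  rw [e2]
  refine Eq.trans ?_ (key.trans ?_)
  · rfl
  · apply Finset.sum_eq_zero
    intro i _
    have h1 : ∀ x : Fin n → ℝ, ∀ s : ℝ, |s| = T → F (L (Fin.insertNth (α := fun _ => ℝ) i s x)) = 0 := by
      intro x s hs
      apply hzero
      have := hcoord (Fin.insertNth (α := fun _ => ℝ) i s x) i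
      simp [hs] at this
      rw [hL]; linarith
    have a1 : |T| = T := abs_of_pos hT0
    have a2 : |-T| = T := by rw [abs_neg, a1]
    have b1 := fun x => h1 x T a1
    have b2 := fun x => h1 x (-T) a2
    simp only [b1, b2]
    simp

/-- truncation -/
def etaT (δ t : ℝ) : ℝ := (max t δ - δ) ^ 2 / max t δ

/-- derivative of the truncation -/
def etaD (δ t : ℝ) : ℝ := 1 - (δ / max t δ) ^ 2

lemma etaT_of_le {δ t : ℝ} (h : t ≤ δ) : etaT δ t = 0 := by simp [etaT, max_eq_right h]

lemma etaD_of_le {δ t : ℝ} (hδ : 0 < δ) (h : t ≤ δ) : etaD δ t = 0 := by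
  simp [etaD, max_eq_right h, hδ.ne']

lemma etaT_nonneg {δ t : ℝ} (hδ : 0 < δ) : 0 ≤ etaT δ t := by
  have : 0 < max t δ := lt_max_of_lt_right hδ
  unfold etaT; positivity

lemma etaT_le {δ t : ℝ} (hδ : 0 < δ) (ht : 0 ≤ t) : etaT δ t ≤ t := by
  rcases le_total t δ with h | h
  · rw [etaT_of_le h]; exact ht
  · have : 0 < t := lt_of_lt_of_le hδ h
    rw [etaT, max_eq_left h, div_le_iff₀ this]; nlinarith

lemma etaD_nonneg {δ t : ℝ} (hδ : 0 < δ) : 0 ≤ etaD δ t := by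
  have h0 : 0 < max t δ := lt_max_of_lt_right hδ
  have h1 : δ / max t δ ≤ 1 := (div_le_one h0).2 (le_max_right _ _)
  have h2 : 0 ≤ δ / max t δ := by positivity
  unfold etaD; nlinarith

lemma etaD_le_one {δ t : ℝ} : etaD δ t ≤ 1 := by
  unfold etaD; nlinarith [sq_nonneg (δ / max t δ)]

lemma etaD_continuous {δ : ℝ} (hδ : 0 < δ) : Continuous (etaD δ) := by
  have h0 : ∀ t, max t δ ≠ 0 := fun t => (lt_max_of_lt_right hδ).ne'
  unfold etaD
  fun_prop (disch := exact h0 _)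

lemma etaT_hasDerivAt {δ : ℝ} (hδ : 0 < δ) (t : ℝ) : HasDerivAt (etaT δ) (etaD δ t) t := by
  rcases lt_trichotomy t δ with h | h | h
  · rw [etaD_of_le hδ h.le]
    have : etaT δ =ᶠ[𝓝 t] fun _ => 0 := by
      filter_upwards [Iio_mem_nhds h] with s hs using etaT_of_le (le_of_lt hs)
    exact (hasDerivAt_const t (0:ℝ)).congr_of_eventuallyEq this
  · subst h
    rw [etaD_of_le hδ le_rfl, hasDerivAt_iff_isLittleO]
    have h1 : (fun s => etaT t s - etaT t t - (s - t) • (0:ℝ)) =O[𝓝 t] fun s => (s - t) ^ 2 := by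
      apply IsBigO.of_bound (1 / t)
      filter_upwards with s
      rw [etaT_of_le le_rfl]
      simp only [smul_zero, sub_zero, Real.norm_eq_abs]
      rw [abs_of_nonneg (etaT_nonneg hδ), abs_of_nonneg (sq_nonneg _)]
      rcases le_total s t with h | h
      · rw [etaT_of_le h]; positivity
      · rw [etaT, max_eq_left h, one_div, inv_mul_eq_div]
        exact div_le_div_of_nonneg_left (sq_nonneg _) hδ h
    refine h1.trans_isLittleO ?_
    have h2 : (fun s : ℝ => s ^ 2) =o[𝓝 0] fun s => s := by
      simpa using isLittleO_pow_id (𝕜 := ℝ) (n := 2) (by norm_num)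
    have h3 : Tendsto (fun s : ℝ => s - t) (𝓝 t) (𝓝 0) := by
      have : Tendsto (fun s : ℝ => s - t) (𝓝 t) (𝓝 (t - t)) := (continuous_id.sub continuous_const).tendsto t
      simpa using this
    exact h2.comp_tendsto h3
  · have ht : 0 < t := hδ.trans h
    have : etaT δ =ᶠ[𝓝 t] fun s => (s - δ) ^ 2 / s := by
      filter_upwards [Ioi_mem_nhds h] with s hs
      rw [etaT, max_eq_left (le_of_lt hs)]
    have h2 := ((((hasDerivAt_id t).sub_const δ).pow 2).div (hasDerivAt_id t) ht.ne')
    refine HasDerivAt.congr_of_eventuallyEq ?_ this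
    have e : etaD δ t = 1 - (δ / t) ^ 2 := by unfold etaD; rw [max_eq_left h.le]
    have e2 : etaD δ t = ((2:ℕ) * (id t - δ) ^ (2 - 1) * 1 * id t
        - ((fun x => id x - δ) ^ 2) t * 1) / id t ^ 2 := by
      rw [e]
      simp
      field_simp
      ring
    rw [e2]
    exact h2

lemma etaT_contDiff {δ : ℝ} (hδ : 0 < δ) : ContDiff ℝ 1 (etaT δ) := by
  rw [contDiff_one_iff_deriv]
  refine ⟨fun t => (etaT_hasDerivAt hδ t).differentiableAt, ?_⟩
  have : deriv (etaT δ) = etaD δ := funext fun t => (etaT_hasDerivAt hδ t).deriv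
  rw [this]; exact etaD_continuous hδ

lemma max_tendsto {t : ℝ} (ht : 0 < t) : Tendsto (fun δ : ℝ => max t δ) (𝓝[>] 0) (𝓝 t) := by
  have : Tendsto (fun δ : ℝ => max t δ) (𝓝 0) (𝓝 (max t 0)) :=
    (continuous_const.max continuous_id).tendsto 0
  rw [max_eq_left ht.le] at this
  exact this.mono_left nhdsWithin_le_nhds

lemma etaT_tendsto {t : ℝ} (ht : 0 < t) : Tendsto (fun δ : ℝ => etaT δ t) (𝓝[>] 0) (𝓝 t) := by
  have h1 := max_tendsto ht
  have h0 : Tendsto (fun δ : ℝ => δ) (𝓝[>] 0) (𝓝 0) := tendsto_id.mono_left nhdsWithin_le_nhds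
  have h2 := ((h1.sub h0).pow 2).div h1 ht.ne'
  have : (t - 0) ^ 2 / t = t := by field_simp; simp
  rw [this] at h2; exact h2

lemma etaD_tendsto {t : ℝ} (ht : 0 < t) : Tendsto (fun δ : ℝ => etaD δ t) (𝓝[>] 0) (𝓝 1) := by
  have h1 := max_tendsto ht
  have h0 : Tendsto (fun δ : ℝ => δ) (𝓝[>] 0) (𝓝 0) := tendsto_id.mono_left nhdsWithin_le_nhds
  have h2 := ((h0.div h1 ht.ne').pow 2).const_sub 1
  unfold etaD
  simpa using h2

section trunc
variable {N : ℕ} {Ω : Set (EuclideanSpace ℝ (Fin N))} {u : EuclideanSpace ℝ (Fin N) → ℝ}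

lemma trunc_K (hΩb : Bornology.IsBounded Ω) (hreg : ContDiffOn ℝ 1 u (closure Ω))
    (hzero : ∀ x ∉ Ω, u x = 0) {δ : ℝ} (hδ : 0 < δ) :
    IsCompact (closure Ω ∩ u ⁻¹' Set.Ici δ) ∧ (closure Ω ∩ u ⁻¹' Set.Ici δ) ⊆ Ω ∧
      ∀ x ∉ (closure Ω ∩ u ⁻¹' Set.Ici δ), u x ≤ δ := by
  refine ⟨?_, ?_, ?_⟩
  · have hcl : IsClosed (closure Ω ∩ u ⁻¹' Set.Ici δ) :=
      hreg.continuousOn.preimage_isClosed_of_isClosed isClosed_closure isClosed_Ici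
    exact hΩb.isCompact_closure.of_isClosed_subset hcl Set.inter_subset_left
  · intro x hx
    by_contra h
    have h2 := hx.2
    simp [hzero x h] at h2
    linarith
  · intro x hx
    by_cases h : x ∈ Ω
    · by_contra h2
      exact hx ⟨subset_closure h, le_of_not_ge h2⟩
    · rw [hzero x h]; exact hδ.le

lemma trunc_test (hΩo : IsOpen Ω) (hΩb : Bornology.IsBounded Ω) (hreg : ContDiffOn ℝ 1 u (closure Ω))
    (hzero : ∀ x ∉ Ω, u x = 0) {δ : ℝ} (hδ : 0 < δ) :
    ContDiff ℝ 1 (fun x => etaT δ (u x)) ∧ HasCompactSupport (fun x => etaT δ (u x)) ∧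
      tsupport (fun x => etaT δ (u x)) ⊆ Ω := by
  obtain ⟨hK, hKΩ, hKz⟩ := trunc_K hΩb hreg hzero hδ
  have hsup : tsupport (fun x => etaT δ (u x)) ⊆ (closure Ω ∩ u ⁻¹' Set.Ici δ) := by
    apply closure_minimal _ hK.isClosed
    intro x hx
    by_contra h
    exact hx (etaT_of_le (hKz x h))
  refine ⟨?_, hK.of_isClosed_subset (isClosed_tsupport _) hsup, hsup.trans hKΩ⟩
  apply contMDiff_iff_contDiff.1
  apply contMDiff_of_tsupport
  intro x hx
  apply contMDiffAt_iff_contDiffAt.2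
  have hxΩ := hKΩ (hsup hx)
  have : ContDiffAt ℝ 1 u x := hreg.contDiffAt (mem_of_superset (hΩo.mem_nhds hxΩ) subset_closure)
  exact (etaT_contDiff hδ).contDiffAt.comp x this

lemma hasGrad (hΩo : IsOpen Ω) (hreg : ContDiffOn ℝ 1 u (closure Ω)) {x} (hx : x ∈ Ω) :
    HasGradientAt u (gradient u x) x := by
  have : ContDiffAt ℝ 1 u x := hreg.contDiffAt (mem_of_superset (hΩo.mem_nhds hx) subset_closure)
  exact (this.differentiableAt (by norm_num)).hasGradientAt

lemma contGrad (hΩo : IsOpen Ω) (hreg : ContDiffOn ℝ 1 u (closure Ω)) :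
    ContinuousOn (gradient u) Ω := by
  have h := (hreg.mono subset_closure).continuousOn_fderiv_of_isOpen hΩo le_rfl
  unfold gradient
  exact (LinearIsometryEquiv.continuous _).comp_continuousOn h

lemma trunc_grad (hΩo : IsOpen Ω) (hreg : ContDiffOn ℝ 1 u (closure Ω)) {δ : ℝ} (hδ : 0 < δ)
    {x} (hx : x ∈ Ω) :
    HasGradientAt (fun y => etaT δ (u y)) (etaD δ (u x) • gradient u x) x := by
  have h1 := (hasGrad hΩo hreg hx).hasFDerivAt
  have h2 := (etaT_hasDerivAt hδ (u x)).comp_hasFDerivAt x h1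
  rw [hasGradientAt_iff_hasFDerivAt]
  have e : (InnerProductSpace.toDual ℝ (EuclideanSpace ℝ (Fin N))) (etaD δ (u x) • gradient u x) =
    etaD δ (u x) • (InnerProductSpace.toDual ℝ (EuclideanSpace ℝ (Fin N))) (gradient u x) := by simp
  rw [e]
  exact h2

lemma trunc_energy {p : ℝ} (hN : 0 < N) (hp : 2 ≤ p) (hΩo : IsOpen Ω) (hΩb : Bornology.IsBounded Ω)
    (hreg : ContDiffOn ℝ 1 u (closure Ω)) (hzero : ∀ x ∉ Ω, u x = 0)
    {g : EuclideanSpace ℝ (Fin N) → ℝ} (hg : ContinuousOn g Ω) (hgpos : ∀ x ∈ Ω, 0 < g x)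
    (hsol : ∀ x ∈ Ω, - pLap p u x = g x) {δ : ℝ} (hδ : 0 < δ) :
    IntegrableOn (fun x => etaD δ (u x) * ‖gradient u x‖ ^ p) Ω ∧
    ∫ x in Ω, etaD δ (u x) * ‖gradient u x‖ ^ p = ∫ x in Ω, g x * etaT δ (u x) := by
  obtain ⟨hK, hKΩ, hKz⟩ := trunc_K hΩb hreg hzero hδ
  set K := (closure Ω ∩ u ⁻¹' Set.Ici δ) with hKdef
  set F : EuclideanSpace ℝ (Fin N) → EuclideanSpace ℝ (Fin N) :=
    fun y => ‖gradient u y‖ ^ (p - 2) • gradient u y with hF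
  have hFd : ∀ x ∈ Ω, DifferentiableAt ℝ F x := by
    intro x hx
    by_contra h
    have h1 := hsol x hx
    have h2 := hgpos x hx
    rw [pLap, vdiv, fderiv_zero_of_not_differentiableAt h] at h1
    simp at h1
    linarith
  have hFv : ∀ x ∈ Ω, vdiv F x = - g x := by
    intro x hx; have := hsol x hx; rw [pLap] at this; linarith
  set W : EuclideanSpace ℝ (Fin N) → EuclideanSpace ℝ (Fin N) := fun y => etaT δ (u y) • F y with hW
  have hWloc : ∀ x ∉ K, W =ᶠ[𝓝 x] fun _ => 0 := by
    intro x hx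
    filter_upwards [hK.isClosed.isOpen_compl.mem_nhds hx] with y hy
    simp [hW, etaT_of_le (hKz y hy)]
  have hWd : Differentiable ℝ W := by
    intro x
    by_cases hx : x ∈ K
    · exact ((trunc_grad hΩo hreg hδ (hKΩ hx)).differentiableAt).smul (hFd x (hKΩ hx))
    · exact (differentiableAt_const (0 : EuclideanSpace ℝ (Fin N))).congr_of_eventuallyEq (hWloc x hx)
  have hWc : HasCompactSupport W := by
    apply HasCompactSupport.intro hK
    intro x hx
    exact (hWloc x hx).eq_of_nhds
  have hvK : ∀ x ∉ K, vdiv W x = 0 := by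
    intro x hx
    rw [vdiv, (hWloc x hx).fderiv_eq]; simp
  have hvΩ : ∀ x ∈ Ω, vdiv W x = etaD δ (u x) * ‖gradient u x‖ ^ p - g x * etaT δ (u x) := by
    intro x hx
    have h1 := (trunc_grad hΩo hreg hδ hx).hasFDerivAt.smul (hFd x hx).hasFDerivAt
    have h2 : fderiv ℝ W x = _ := h1.fderiv
    rw [vdiv, h2]
    simp only [_root_.add_apply, _root_.smul_apply,
      ContinuousLinearMap.smulRight_apply, PiLp.add_apply, PiLp.smul_apply, smul_eq_mul,
      Finset.sum_add_distrib, InnerProductSpace.toDual_apply_apply]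
    rw [← Finset.mul_sum]
    have h3 : (∑ i, (fderiv ℝ F x (EuclideanSpace.single i 1)) i) = - g x := hFv x hx
    rw [h3]
    have h4 : ∀ i, inner ℝ (etaD δ (u x) • gradient u x) (EuclideanSpace.single i (1:ℝ)) =
        etaD δ (u x) * gradient u x i := by
      intro i
      rw [EuclideanSpace.inner_single_right]
      simp
    simp only [h4]
    have h5 : ∑ i, etaD δ (u x) * gradient u x i * F x i = etaD δ (u x) * ‖gradient u x‖ ^ p := by
      have : ∀ i, etaD δ (u x) * gradient u x i * F x i =
        (etaD δ (u x) * ‖gradient u x‖ ^ (p - 2)) * (gradient u x i)^2 := by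
        intro i; simp [hF]; ring
      simp only [this]
      rw [← Finset.mul_sum]
      have h6 : ∑ i, (gradient u x i)^2 = ‖gradient u x‖ ^ (2:ℝ) := by
        rw [Real.rpow_two, EuclideanSpace.norm_sq_eq]; simp
      rw [h6, mul_assoc]
      congr 1
      rw [← Real.rpow_add_of_nonneg (norm_nonneg _) (by linarith) (by norm_num)]
      congr 1; ring
    rw [h5]; ring
  have hgrad := contGrad hΩo hreg
  have hu : ContinuousOn u Ω := hreg.continuousOn.mono subset_closure
  have c1 : ContinuousOn (fun x => etaD δ (u x) * ‖gradient u x‖ ^ p) Ω := by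
    apply ((etaD_continuous hδ).comp_continuousOn hu).mul
    exact hgrad.norm.rpow_const (fun x _ => Or.inr (by linarith))
  have c2 : ContinuousOn (fun x => g x * etaT δ (u x)) Ω :=
    hg.mul ((etaT_contDiff hδ).continuous.comp_continuousOn hu)
  have z1 : ∀ x ∉ K, etaD δ (u x) * ‖gradient u x‖ ^ p = 0 := by
    intro x hx; rw [etaD_of_le hδ (hKz x hx), zero_mul]
  have z2 : ∀ x ∉ K, g x * etaT δ (u x) = 0 := by
    intro x hx; rw [etaT_of_le (hKz x hx), mul_zero]
  have i1 : Integrable (fun x => etaD δ (u x) * ‖gradient u x‖ ^ p) := by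
    rw [← integrableOn_iff_integrable_of_support_subset (s := K)]
    · exact (c1.mono hKΩ).integrableOn_compact hK
    · intro x hx; by_contra h; exact hx (z1 x h)
  have i2 : Integrable (fun x => g x * etaT δ (u x)) := by
    rw [← integrableOn_iff_integrable_of_support_subset (s := K)]
    · exact (c2.mono hKΩ).integrableOn_compact hK
    · intro x hx; by_contra h; exact hx (z2 x h)
  have hv : vdiv W = fun x => etaD δ (u x) * ‖gradient u x‖ ^ p - g x * etaT δ (u x) := by
    funext x
    by_cases hx : x ∈ K
    · exact hvΩ x (hKΩ hx)
    · rw [hvK x hx, z1 x hx, z2 x hx, sub_zero]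
  have hint : ∫ x, vdiv W x = 0 := by
    obtain ⟨n, rfl⟩ : ∃ n, N = n + 1 := ⟨N - 1, by omega⟩
    apply vdiv_integral_zero W hWd hWc
    rw [hv]; exact i1.sub i2
  rw [hv, integral_sub i1 i2] at hint
  refine ⟨i1.integrableOn, ?_⟩
  rw [setIntegral_eq_integral_of_forall_compl_eq_zero (fun x hx => z1 x (fun h => hx (hKΩ h))),
    setIntegral_eq_integral_of_forall_compl_eq_zero (fun x hx => z2 x (fun h => hx (hKΩ h)))]
  linarith

end trunc

section energy
variable {N : ℕ} {Ω : Set (EuclideanSpace ℝ (Fin N))} {u : EuclideanSpace ℝ (Fin N) → ℝ}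

lemma energy_identity {p : ℝ} (hN : 0 < N) (hp : 2 ≤ p) (hΩo : IsOpen Ω) (hΩb : Bornology.IsBounded Ω)
    (hreg : ContDiffOn ℝ 1 u (closure Ω)) (hzero : ∀ x ∉ Ω, u x = 0) (hpos : ∀ x ∈ Ω, 0 < u x)
    {g : EuclideanSpace ℝ (Fin N) → ℝ} (hg : ContinuousOn g Ω) (hgpos : ∀ x ∈ Ω, 0 < g x)
    (hsol : ∀ x ∈ Ω, - pLap p u x = g x) (hgu : IntegrableOn (fun x => g x * u x) Ω) :
    IntegrableOn (fun x => ‖gradient u x‖ ^ p) Ω ∧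
    ∫ x in Ω, ‖gradient u x‖ ^ p = ∫ x in Ω, g x * u x := by
  have hT := fun (δ : ℝ) (hδ : 0 < δ) => trunc_energy hN hp hΩo hΩb hreg hzero hg hgpos hsol hδ
  have hm : MeasurableSet Ω := hΩo.measurableSet
  have hu : ContinuousOn u Ω := hreg.continuousOn.mono subset_closure
  have hcg : ContinuousOn (fun x => ‖gradient u x‖ ^ p) Ω :=
    (contGrad hΩo hreg).norm.rpow_const (fun x _ => Or.inr (by linarith))
  set d : ℕ → ℝ := fun k => 1 / ((k : ℝ) + 1) with hd
  have hd0 : ∀ k, 0 < d k := fun k => by simp only [hd]; positivity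
  have hdt : Tendsto d atTop (𝓝[>] 0) :=
    tendsto_nhdsWithin_iff.2 ⟨tendsto_one_div_add_atTop_nhds_zero_nat, Eventually.of_forall hd0⟩
  have hbound : ∀ k, ∫ x in Ω, etaD (d k) (u x) * ‖gradient u x‖ ^ p ≤ ∫ x in Ω, g x * u x := by
    intro k
    rw [(hT _ (hd0 k)).2]
    apply integral_mono_of_nonneg
    · filter_upwards [ae_restrict_mem hm] with x hx using
        mul_nonneg (hgpos x hx).le (etaT_nonneg (hd0 k))
    · exact hgu
    · filter_upwards [ae_restrict_mem hm] with x hx using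
        mul_le_mul_of_nonneg_left (etaT_le (hd0 k) (hpos x hx).le) (hgpos x hx).le
  have hint : IntegrableOn (fun x => ‖gradient u x‖ ^ p) Ω := by
    refine ⟨hcg.aestronglyMeasurable hm, ?_⟩
    rw [hasFiniteIntegral_iff_ofReal (Eventually.of_forall fun x => by positivity)]
    have h1 : ∫⁻ x in Ω, ENNReal.ofReal (‖gradient u x‖ ^ p) =
        ∫⁻ x in Ω, liminf (fun k => ENNReal.ofReal (etaD (d k) (u x) * ‖gradient u x‖ ^ p)) atTop := by
      apply lintegral_congr_ae
      filter_upwards [ae_restrict_mem hm] with x hx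
      symm
      apply Tendsto.liminf_eq
      apply ENNReal.tendsto_ofReal
      have := ((etaD_tendsto (hpos x hx)).comp hdt).mul_const (‖gradient u x‖ ^ p)
      simpa using this
    rw [h1]
    refine lt_of_le_of_lt (lintegral_liminf_le' ?_) ?_
    · intro k
      exact (hT _ (hd0 k)).1.1.aemeasurable.ennreal_ofReal
    · refine lt_of_le_of_lt (b := ENNReal.ofReal (∫ x in Ω, g x * u x)) ?_ ENNReal.ofReal_lt_top
      apply liminf_le_of_frequently_le'
      apply Frequently.of_forall
      intro k
      rw [← ofReal_integral_eq_lintegral_ofReal (hT _ (hd0 k)).1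
        (Eventually.of_forall fun x => mul_nonneg (etaD_nonneg (hd0 k)) (by positivity))]
      exact ENNReal.ofReal_le_ofReal (hbound k)
  refine ⟨hint, ?_⟩
  have l1 : Tendsto (fun k => ∫ x in Ω, etaD (d k) (u x) * ‖gradient u x‖ ^ p) atTop
      (𝓝 (∫ x in Ω, ‖gradient u x‖ ^ p)) := by
    apply tendsto_integral_of_dominated_convergence _ (fun k => (hT _ (hd0 k)).1.1) hint
    · intro k
      refine Eventually.of_forall fun x => ?_
      rw [norm_mul, Real.norm_eq_abs, Real.norm_eq_abs, abs_of_nonneg (etaD_nonneg (hd0 k)),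
        abs_of_nonneg (by positivity)]
      exact mul_le_of_le_one_left (by positivity) etaD_le_one
    · filter_upwards [ae_restrict_mem hm] with x hx
      have := ((etaD_tendsto (hpos x hx)).comp hdt).mul_const (‖gradient u x‖ ^ p)
      simpa using this
  have l2 : Tendsto (fun k => ∫ x in Ω, g x * etaT (d k) (u x)) atTop
      (𝓝 (∫ x in Ω, g x * u x)) := by
    apply tendsto_integral_of_dominated_convergence (fun x => g x * u x) _ hgu
    · intro k
      filter_upwards [ae_restrict_mem hm] with x hx
      rw [Real.norm_eq_abs, abs_of_nonneg (mul_nonneg (hgpos x hx).le (etaT_nonneg (hd0 k)))]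
      exact mul_le_mul_of_nonneg_left (etaT_le (hd0 k) (hpos x hx).le) (hgpos x hx).le
    · filter_upwards [ae_restrict_mem hm] with x hx
      exact ((etaT_tendsto (hpos x hx)).comp hdt).const_mul (g x)
    · intro k
      exact (hg.mul ((etaT_contDiff (hd0 k)).continuous.comp_continuousOn hu)).aestronglyMeasurable hm
  have e : (fun k => ∫ x in Ω, etaD (d k) (u x) * ‖gradient u x‖ ^ p) =
    fun k => ∫ x in Ω, g x * etaT (d k) (u x) := funext fun k => (hT _ (hd0 k)).2
  rw [e] at l1
  exact tendsto_nhds_unique l1 l2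

lemma Qfun_tendsto {p lam : ℝ} (hp : 2 ≤ p) (hpN : p < N) (hΩo : IsOpen Ω) (hΩb : Bornology.IsBounded Ω)
    {v : ℕ → EuclideanSpace ℝ (Fin N) → ℝ} {B : ℝ} {h : EuclideanSpace ℝ (Fin N) → ℝ}
    (hv : ∀ k, ContDiffOn ℝ 1 (v k) Ω)
    (hB : ∀ k, ∀ x ∈ Ω, |v k x| ≤ B) (hh : ∀ k, ∀ x ∈ Ω, ‖gradient (v k) x‖ ^ p ≤ h x)
    (hhi : IntegrableOn h Ω)
    (hlim : ∀ x ∈ Ω, Tendsto (fun k => v k x) atTop (𝓝 (u x)))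
    (hglim : ∀ x ∈ Ω, Tendsto (fun k => gradient (v k) x) atTop (𝓝 (gradient u x)))
    (hne : ∫ x in Ω, |u x| ^ ((N : ℝ) * p / ((N : ℝ) - p)) ≠ 0) :
    Tendsto (fun k => Qfun Ω p lam (v k)) atTop (𝓝 (Qfun Ω p lam u)) ∧
    Tendsto (fun k => ∫ x in Ω, |v k x| ^ ((N : ℝ) * p / ((N : ℝ) - p))) atTop
      (𝓝 (∫ x in Ω, |u x| ^ ((N : ℝ) * p / ((N : ℝ) - p)))) := by
  have hm : MeasurableSet Ω := hΩo.measurableSet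
  have : IsFiniteMeasure (volume.restrict Ω) := ⟨by
    rw [Measure.restrict_apply_univ]; exact hΩb.measure_lt_top⟩
  have hpow : ∀ s : ℝ, 0 < s → Tendsto (fun k => ∫ x in Ω, |v k x| ^ s) atTop
      (𝓝 (∫ x in Ω, |u x| ^ s)) := by
    intro s hs
    apply tendsto_integral_of_dominated_convergence (fun _ => B ^ s) _ (integrable_const _)
    · intro k
      filter_upwards [ae_restrict_mem hm] with x hx
      rw [Real.norm_eq_abs, abs_of_nonneg (by positivity)]
      exact Real.rpow_le_rpow (abs_nonneg _) (hB k x hx) hs.le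
    · filter_upwards [ae_restrict_mem hm] with x hx
      exact (hlim x hx).abs.rpow_const (Or.inr hs.le)
    · intro k
      exact ((hv k).continuousOn.abs.rpow_const (fun x _ => Or.inr hs.le)).aestronglyMeasurable hm
  have hgr : Tendsto (fun k => ∫ x in Ω, ‖gradient (v k) x‖ ^ p) atTop
      (𝓝 (∫ x in Ω, ‖gradient u x‖ ^ p)) := by
    apply tendsto_integral_of_dominated_convergence h _ hhi
    · intro k
      filter_upwards [ae_restrict_mem hm] with x hx
      rw [Real.norm_eq_abs, abs_of_nonneg (by positivity)]
      exact hh k x hx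
    · filter_upwards [ae_restrict_mem hm] with x hx
      exact (hglim x hx).norm.rpow_const (Or.inr (by linarith))
    · intro k
      have h1 := (hv k).continuousOn_fderiv_of_isOpen hΩo le_rfl
      have h2 : ContinuousOn (gradient (v k)) Ω := by
        unfold gradient
        exact (LinearIsometryEquiv.continuous _).comp_continuousOn h1
      exact (h2.norm.rpow_const (fun x _ => Or.inr (by linarith))).aestronglyMeasurable hm
  have hNp : 0 < (N : ℝ) - p := by linarith
  have hq : 0 < (N : ℝ) * p / ((N : ℝ) - p) := by
    have : (0:ℝ) < N := by linarith
    have : (0:ℝ) < p := by linarith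
    positivity
  refine ⟨?_, hpow _ hq⟩
  unfold Qfun
  have hI : 0 < ∫ x in Ω, |u x| ^ ((N : ℝ) * p / ((N : ℝ) - p)) :=
    lt_of_le_of_ne (integral_nonneg fun x => by positivity) (Ne.symm hne)
  apply Tendsto.div
  · exact hgr.sub ((hpow p (by linarith)).const_mul lam)
  · exact (hpow _ hq).rpow_const (Or.inl hne)
  · exact (Real.rpow_pos_of_pos hI _).ne'

lemma mollify (hΩo : IsOpen Ω) (hu : ContDiff ℝ 1 u) (hc : HasCompactSupport u) (hs : tsupport u ⊆ Ω) :
    ∃ (v : ℕ → EuclideanSpace ℝ (Fin N) → ℝ) (B : ℝ), 0 ≤ B ∧ (∀ k, TestOn Ω (v k)) ∧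
      (∀ k x, |v k x| ≤ B) ∧ (∀ k x, ‖gradient (v k) x‖ ≤ B) ∧
      (∀ x, Tendsto (fun k => v k x) atTop (𝓝 (u x))) ∧
      (∀ x, Tendsto (fun k => gradient (v k) x) atTop (𝓝 (gradient u x))) := by
  obtain ⟨r, hr, hrΩ⟩ := hc.isCompact.exists_cthickening_subset_open hΩo hs
  set R : ℕ → ℝ := fun k => r / ((k:ℝ) + 1) with hR
  have hR0 : ∀ k, 0 < R k := fun k => by simp only [hR]; positivity
  have hRr : ∀ k, R k ≤ r := fun k => div_le_self hr.le (by have : (0:ℝ) ≤ k := by positivity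
                                                            linarith)
  have hRt : Tendsto R atTop (𝓝 0) := by
    have := tendsto_one_div_add_atTop_nhds_zero_nat (𝕜 := ℝ).const_mul r
    simpa [hR, div_eq_mul_inv] using this
  let φ : ℕ → ContDiffBump (0 : EuclideanSpace ℝ (Fin N)) := fun k =>
    ⟨R k / 2, R k, by have := hR0 k; linarith, by have := hR0 k; linarith⟩
  have hφ : Tendsto (fun k => (φ k).rOut) atTop (𝓝 0) := hRt
  let v : ℕ → EuclideanSpace ℝ (Fin N) → ℝ := fun k =>
    convolution ((φ k).normed volume) u (ContinuousLinearMap.lsmul ℝ ℝ) volume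
  have hfc : Continuous (fderiv ℝ u) := hu.continuous_fderiv one_ne_zero
  have hD : ∀ k x, HasFDerivAt (v k)
      (convolution ((φ k).normed volume) (fderiv ℝ u) (ContinuousLinearMap.lsmul ℝ ℝ) volume x) x := by
    intro k x
    exact hc.hasFDerivAt_convolution_right (ContinuousLinearMap.lsmul ℝ ℝ)
      (φ k).continuous_normed.locallyIntegrable hu x
  obtain ⟨B1, hB1⟩ := hc.exists_bound_of_continuous hu.continuous
  obtain ⟨B2, hB2⟩ := (hc.fderiv (𝕜 := ℝ)).exists_bound_of_continuous hfc
  have hB10 : 0 ≤ B1 := (norm_nonneg _).trans (hB1 0)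
  have hB20 : 0 ≤ B2 := (norm_nonneg _).trans (hB2 0)
  have hgn : ∀ (w : EuclideanSpace ℝ (Fin N) → ℝ) x, ‖gradient w x‖ = ‖fderiv ℝ w x‖ := by
    intro w x; unfold gradient; simp
  refine ⟨v, 3 * (B1 + B2), by positivity, ?_, ?_, ?_, ?_, ?_⟩
  · intro k
    have hsup : tsupport (v k) ⊆ Metric.cthickening r (tsupport u) := by
      apply closure_minimal _ Metric.isClosed_cthickening
      refine (support_convolution_subset _).trans ?_
      intro x hx
      obtain ⟨a, ha, b, hb, rfl⟩ := Set.mem_add.1 hx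
      rw [(φ k).support_normed_eq] at ha
      apply Metric.mem_cthickening_of_dist_le _ b _ _ (subset_tsupport u hb)
      simp at ha
      simp
      exact ha.le.trans (hRr k)
    refine ⟨?_, ?_, hsup.trans hrΩ⟩
    · exact (φ k).hasCompactSupport_normed.contDiff_convolution_left _ (φ k).contDiff_normed
        hu.continuous.locallyIntegrable
    · exact (hc.isCompact.cthickening).of_isClosed_subset (isClosed_tsupport _) hsup
  · intro k x
    have h1 := (φ k).dist_normed_convolution_le (μ := volume) (g := u) (x₀ := x) (ε := 2 * B1)
      hu.continuous.aestronglyMeasurable (fun y _ => by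
        rw [dist_eq_norm]; have := norm_sub_le (u y) (u x); linarith [hB1 y, hB1 x])
    rw [dist_eq_norm] at h1
    have h2 := norm_sub_norm_le (v k x) (u x)
    have h3 : ‖v k x - u x‖ ≤ 2 * B1 := h1
    rw [← Real.norm_eq_abs]
    linarith [hB1 x]
  · intro k x
    have h1 := (φ k).dist_normed_convolution_le (μ := volume) (g := fderiv ℝ u) (x₀ := x) (ε := 2 * B2)
      hfc.aestronglyMeasurable (fun y _ => by
        rw [dist_eq_norm]; have := norm_sub_le (fderiv ℝ u y) (fderiv ℝ u x); linarith [hB2 y, hB2 x])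
    rw [dist_eq_norm, ← (hD k x).fderiv] at h1
    have h2 := norm_sub_norm_le (fderiv ℝ (v k) x) (fderiv ℝ u x)
    rw [hgn]
    linarith [hB2 x]
  · intro x
    exact ContDiffBump.convolution_tendsto_right_of_continuous hφ hu.continuous x
  · intro x
    have := ContDiffBump.convolution_tendsto_right_of_continuous (μ := volume) hφ hfc x
    have h2 : Tendsto (fun k => fderiv ℝ (v k) x) atTop (𝓝 (fderiv ℝ u x)) := by
      refine this.congr fun k => ?_
      exact (hD k x).fderiv.symm
    unfold gradient
    exact ((LinearIsometryEquiv.continuous _).tendsto _).comp h2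

lemma exists_test {p lam S : ℝ} (hp : 2 ≤ p) (hpN : p < N) (hΩo : IsOpen Ω)
    (hΩb : Bornology.IsBounded Ω)
    (hreg : ContDiffOn ℝ 1 u (closure Ω)) (hzero : ∀ x ∉ Ω, u x = 0) (hpos : ∀ x ∈ Ω, 0 < u x)
    (hgi : IntegrableOn (fun x => ‖gradient u x‖ ^ p) Ω)
    (hne : ∫ x in Ω, |u x| ^ ((N : ℝ) * p / ((N : ℝ) - p)) ≠ 0)
    (hQ : Qfun Ω p lam u < S) :
    ∃ v, TestOn Ω v ∧ v ≠ 0 ∧ Qfun Ω p lam v < S := by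
  have hq : (N : ℝ) * p / ((N : ℝ) - p) ≠ 0 := by
    have h1 : (0:ℝ) < N := by linarith
    have h2 : (0:ℝ) < p := by linarith
    have h3 : (0:ℝ) < N - p := by linarith
    positivity
  have hm : MeasurableSet Ω := hΩo.measurableSet
  set d : ℕ → ℝ := fun k => 1 / ((k : ℝ) + 1) with hd
  have hd0 : ∀ k, 0 < d k := fun k => by simp only [hd]; positivity
  have hdt : Tendsto d atTop (𝓝[>] 0) :=
    tendsto_nhdsWithin_iff.2 ⟨tendsto_one_div_add_atTop_nhds_zero_nat, Eventually.of_forall hd0⟩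
  obtain ⟨B, hB⟩ := hΩb.isCompact_closure.exists_bound_of_continuousOn hreg.continuousOn
  have hT := fun k => trunc_test hΩo hΩb hreg hzero (hd0 k)
  have hgr : ∀ k, ∀ x ∈ Ω, gradient (fun y => etaT (d k) (u y)) x = etaD (d k) (u x) • gradient u x :=
    fun k x hx => (trunc_grad hΩo hreg (hd0 k) hx).gradient
  obtain ⟨l1, l2⟩ := Qfun_tendsto (u := u) (lam := lam) (v := fun k x => etaT (d k) (u x)) (B := B)
    (h := fun x => ‖gradient u x‖ ^ p) hp hpN hΩo hΩb
    (fun k => (hT k).1.contDiffOn) (fun k x hx => by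
      rw [abs_of_nonneg (etaT_nonneg (hd0 k))]
      refine (etaT_le (hd0 k) (hpos x hx).le).trans ((le_abs_self _).trans (hB x (subset_closure hx))))
    (fun k x hx => by
      rw [hgr k x hx, norm_smul, Real.norm_eq_abs, abs_of_nonneg (etaD_nonneg (hd0 k))]
      apply Real.rpow_le_rpow (mul_nonneg (etaD_nonneg (hd0 k)) (norm_nonneg _)) _ (by linarith)
      exact mul_le_of_le_one_left (norm_nonneg _) etaD_le_one)
    hgi (fun x hx => (etaT_tendsto (hpos x hx)).comp hdt)
    (fun x hx => by
      have h1 := ((etaD_tendsto (hpos x hx)).comp hdt).smul_const (gradient u x)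
      rw [one_smul] at h1
      exact h1.congr fun k => (hgr k x hx).symm) hne
  obtain ⟨k, hk1, hk2⟩ := ((l1.eventually (gt_mem_nhds hQ)).and (l2.eventually_ne hne)).exists
  obtain ⟨v, B', hB', hv1, hv2, hv3, hv4, hv5⟩ := mollify hΩo (hT k).1 (hT k).2.1 (hT k).2.2
  have hfin : volume Ω ≠ ⊤ := hΩb.measure_lt_top.ne
  obtain ⟨m1, m2⟩ := Qfun_tendsto (u := fun x => etaT (d k) (u x)) (lam := lam) (v := v) (B := B')
    (h := fun x => B' ^ p) hp hpN hΩo hΩb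
    (fun j => ((hv1 j).1.of_le (by exact_mod_cast le_top)).contDiffOn) (fun j x _ => hv2 j x)
    (fun j x _ => Real.rpow_le_rpow (norm_nonneg _) (hv3 j x) (by linarith))
    (integrableOn_const hfin) (fun x _ => hv4 x) (fun x _ => hv5 x) hk2
  obtain ⟨j, hj1, hj2⟩ := ((m1.eventually (gt_mem_nhds hk1)).and (m2.eventually_ne hk2)).exists
  refine ⟨v j, hv1 j, ?_, hj1⟩
  intro h0
  apply hj2
  simp [h0, Real.zero_rpow hq]

lemma Sfun_lt {p lam S : ℝ} (hp : 2 ≤ p) (hpN : p < N) (hΩo : IsOpen Ω)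
    (hΩb : Bornology.IsBounded Ω)
    (hreg : ContDiffOn ℝ 1 u (closure Ω)) (hzero : ∀ x ∉ Ω, u x = 0) (hpos : ∀ x ∈ Ω, 0 < u x)
    (hgi : IntegrableOn (fun x => ‖gradient u x‖ ^ p) Ω)
    (hne : ∫ x in Ω, |u x| ^ ((N : ℝ) * p / ((N : ℝ) - p)) ≠ 0)
    (hQ : Qfun Ω p lam u < S) (hS : 0 < S) : Sfun Ω p lam < S := by
  obtain ⟨v, h1, h2, h3⟩ := exists_test hp hpN hΩo hΩb hreg hzero hpos hgi hne hQ
  unfold Sfun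
  by_cases hb : BddBelow {r : ℝ | ∃ u, TestOn Ω u ∧ u ≠ 0 ∧ r = Qfun Ω p lam u}
  · exact csInf_lt_of_lt hb ⟨v, h1, h2, rfl⟩ h3
  · rw [Real.sInf_of_not_bddBelow hb]; exact hS

end energy

section bub
variable {N : ℕ} {p : ℝ}

lemma Cone_pos (hp : 2 ≤ p) (hpN : p < N) : 0 < Cone N p := by
  have h1 : (0:ℝ) < N := by linarith
  have h2 : (0:ℝ) < (N - p) / (p - 1) := div_pos (by linarith) (by linarith)
  unfold Cone; positivity

lemma Czero_pos (hp : 2 ≤ p) (hpN : p < N) : 0 < Czero N p := by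
  have h1 : (0:ℝ) < N := by linarith
  have h2 : (0:ℝ) < (p - 1) / (N - p) := div_pos (by linarith) (by linarith)
  have h3 : 0 < (volume (Metric.ball (0 : EuclideanSpace ℝ (Fin N)) 1)).toReal :=
    ENNReal.toReal_pos (Metric.measure_ball_pos _ _ one_pos).ne' measure_ball_lt_top.ne
  unfold Czero; positivity

lemma bubble_eq (p ε : ℝ) (x₀ x : EuclideanSpace ℝ (Fin N)) :
    bubble p ε x₀ x = Cone N p * (ε / (ε ^ p + ‖x - x₀‖ ^ (p / (p - 1)))) ^ (((N : ℝ) - p) / p) := rfl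

lemma bubble_pos (hp : 2 ≤ p) (hpN : p < N) {ε : ℝ} (hε : 0 < ε) (x₀ x : EuclideanSpace ℝ (Fin N)) :
    0 < bubble p ε x₀ x := by
  rw [bubble_eq]
  have := Cone_pos hp hpN
  have h2 : 0 < ε ^ p + ‖x - x₀‖ ^ (p / (p - 1)) := by positivity
  positivity

lemma bubble_continuous (hp : 2 ≤ p) {ε : ℝ} (hε : 0 < ε)
    (x₀ : EuclideanSpace ℝ (Fin N)) : Continuous (bubble p ε x₀) := by
  have h2 : ∀ x, 0 < ε ^ p + ‖x - x₀‖ ^ (p / (p - 1)) := fun x => by positivity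
  have hpp : 0 ≤ p / (p - 1) := div_nonneg (by linarith) (by linarith)
  have : bubble p ε x₀ = fun x => Cone N p * (ε / (ε ^ p + ‖x - x₀‖ ^ (p / (p - 1)))) ^ (((N : ℝ) - p) / p) := rfl
  rw [this]
  apply continuous_const.mul
  apply Continuous.rpow_const
  · apply continuous_const.div
    · apply continuous_const.add
      exact ((continuous_id.sub continuous_const).norm).rpow_const (fun _ => Or.inr hpp)
    · exact fun x => (h2 x).ne'
  · intro x; left; exact (div_pos hε (h2 x)).ne'

lemma bubble_le (hp : 2 ≤ p) (hpN : p < N) {ε r : ℝ} (hε : 0 < ε) (hr : 0 < r)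
    (x₀ x : EuclideanSpace ℝ (Fin N)) (hx : r ≤ ‖x - x₀‖) :
    bubble p ε x₀ x ≤ Cone N p * (1 / r ^ (p / (p - 1))) ^ (((N : ℝ) - p) / p) * ε ^ (((N : ℝ) - p) / p) := by
  rw [bubble_eq, mul_assoc, ← Real.mul_rpow (by positivity) hε.le]
  have hC := Cone_pos hp hpN
  have ha : 0 ≤ ((N : ℝ) - p) / p := div_nonneg (by linarith) (by linarith)
  have hpp : 0 ≤ p / (p - 1) := div_nonneg (by linarith) (by linarith)
  apply mul_le_mul_of_nonneg_left _ hC.le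
  apply Real.rpow_le_rpow (by positivity) _ ha
  rw [one_div_mul_eq_div]
  apply div_le_div_of_nonneg_left hε.le (by positivity)
  have : r ^ (p / (p - 1)) ≤ ‖x - x₀‖ ^ (p / (p - 1)) := Real.rpow_le_rpow hr.le hx hpp
  have h3 : 0 < ε ^ p := by positivity
  linarith

lemma bubble_scale (hp : 2 ≤ p) {ε : ℝ} (hε : 0 < ε) (x₀ y : EuclideanSpace ℝ (Fin N)) :
    bubble p ε x₀ (x₀ + ε ^ (p - 1) • y) =
      ε ^ (-((p - 1) * (((N : ℝ) - p) / p))) * bubble p 1 0 y := by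
  rw [bubble_eq, bubble_eq]
  have hR : 0 < ε ^ (p - 1) := by positivity
  have e1 : ‖x₀ + ε ^ (p - 1) • y - x₀‖ ^ (p / (p - 1)) = ε ^ p * ‖y‖ ^ (p / (p - 1)) := by
    rw [add_sub_cancel_left, norm_smul, Real.norm_eq_abs, abs_of_pos hR,
      Real.mul_rpow hR.le (norm_nonneg _), ← Real.rpow_mul hε.le]
    congr 2
    have : p - 1 ≠ 0 := by linarith
    field_simp
  rw [e1, sub_zero, Real.one_rpow]
  have h2 : 0 < 1 + ‖y‖ ^ (p / (p - 1)) := by positivity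
  have e2 : ε / (ε ^ p + ε ^ p * ‖y‖ ^ (p / (p - 1))) = ε ^ (-(p - 1)) * (1 / (1 + ‖y‖ ^ (p / (p - 1)))) := by
    have : ε ^ (-(p - 1)) = ε / ε ^ p := by
      rw [show -(p-1) = 1 - p by ring, Real.rpow_sub hε, Real.rpow_one]
    rw [this]
    have : ε ^ p ≠ 0 := by positivity
    field_simp
  rw [e2, Real.mul_rpow (by positivity) (by positivity), ← Real.rpow_mul hε.le]
  rw [show -(p - 1) * (((N : ℝ) - p) / p) = -((p - 1) * (((N : ℝ) - p) / p)) by ring]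
  ring

lemma bubble_integrable (hp : 2 ≤ p) (hpN : p < N) {s : ℝ} (hs : (N : ℝ) < s * ((N - p) / (p - 1))) :
    Integrable (fun y : EuclideanSpace ℝ (Fin N) => bubble p 1 0 y ^ s) := by
  have hC := Cone_pos hp hpN
  have ha : 0 < ((N : ℝ) - p) / p := div_pos (by linarith) (by linarith)
  have hpp : 0 < p / (p - 1) := div_pos (by linarith) (by linarith)
  have hN : (0:ℝ) < N := by linarith
  have hs0 : 0 < s := by
    by_contra h
    have : s * ((N - p) / (p - 1)) ≤ 0 :=
      mul_nonpos_of_nonpos_of_nonneg (not_lt.1 h) (div_nonneg (by linarith) (by linarith))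
    linarith
  have hi : Integrable (fun y : EuclideanSpace ℝ (Fin N) => (1 + ‖y‖) ^ (-(s * ((N - p) / (p - 1))))) :=
    integrable_one_add_norm (by simpa using hs)
  set k : ℝ := (Cone N p * (2 ^ (p / (p - 1))) ^ (((N:ℝ) - p) / p)) ^ s
  refine (hi.const_mul k).mono' ?_ ?_
  · apply Continuous.aestronglyMeasurable
    exact (bubble_continuous hp one_pos 0).rpow_const (fun x => Or.inr hs0.le)
  · refine Eventually.of_forall fun y => ?_
    have hb := bubble_pos hp hpN one_pos 0 y
    rw [Real.norm_eq_abs, abs_of_nonneg (by positivity)]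
    have h1 : (1 + ‖y‖) ^ (p / (p - 1)) ≤ 2 ^ (p / (p - 1)) * (1 + ‖y‖ ^ (p / (p - 1))) := by
      rcases le_total ‖y‖ 1 with h | h
      · calc (1 + ‖y‖) ^ (p / (p - 1)) ≤ 2 ^ (p / (p - 1)) :=
            Real.rpow_le_rpow (by positivity) (by linarith) hpp.le
          _ ≤ _ := by
            have : 0 ≤ ‖y‖ ^ (p / (p - 1)) := by positivity
            have h3 : (0:ℝ) ≤ 2 ^ (p / (p - 1)) := by positivity
            nlinarith
      · calc (1 + ‖y‖) ^ (p / (p - 1)) ≤ (2 * ‖y‖) ^ (p / (p - 1)) :=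
            Real.rpow_le_rpow (by positivity) (by linarith) hpp.le
          _ = 2 ^ (p / (p - 1)) * ‖y‖ ^ (p / (p - 1)) := Real.mul_rpow (by norm_num) (norm_nonneg _)
          _ ≤ _ := by
            have h3 : (0:ℝ) ≤ 2 ^ (p / (p - 1)) := by positivity
            nlinarith
    have h2 : bubble p 1 0 y ≤ Cone N p * (2 ^ (p / (p - 1))) ^ (((N:ℝ) - p) / p) *
        (1 + ‖y‖) ^ (-((N - p) / (p - 1))) := by
      rw [bubble_eq, sub_zero, Real.one_rpow]
      have e : (1 + ‖y‖) ^ (-((N - p) / (p - 1))) =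
          (1 / (1 + ‖y‖) ^ (p / (p - 1))) ^ (((N:ℝ) - p) / p) := by
        rw [one_div, ← Real.rpow_neg (by positivity), ← Real.rpow_mul (by positivity)]
        congr 1
        have : p - 1 ≠ 0 := by linarith
        have : p ≠ 0 := by linarith
        field_simp
      rw [e, mul_assoc, ← Real.mul_rpow (by positivity) (by positivity)]
      apply mul_le_mul_of_nonneg_left _ hC.le
      apply Real.rpow_le_rpow (by positivity) _ ha.le
      rw [mul_one_div, div_le_div_iff₀ (by positivity) (by positivity)]
      linarith
    calc bubble p 1 0 y ^ s ≤ (Cone N p * (2 ^ (p / (p - 1))) ^ (((N:ℝ) - p) / p) *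
        (1 + ‖y‖) ^ (-((N - p) / (p - 1)))) ^ s := Real.rpow_le_rpow hb.le h2 hs0.le
      _ = _ := by
        have e : -(s * (((N:ℝ) - p) / (p - 1))) = -(((N:ℝ) - p) / (p - 1)) * s := by ring
        rw [Real.mul_rpow (by positivity) (by positivity), e,
          Real.rpow_mul (x := 1 + ‖y‖) (by positivity)]

lemma bubble_int_scale (hp : 2 ≤ p) (hpN : p < N) {ε : ℝ} (hε : 0 < ε) (s : ℝ)
    (x₀ : EuclideanSpace ℝ (Fin N)) (ψ : EuclideanSpace ℝ (Fin N) → ℝ) :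
    ∫ x, bubble p ε x₀ x ^ s * ψ x = ε ^ ((p - 1) * (N - s * (((N:ℝ) - p) / p))) *
      ∫ y, bubble p 1 0 y ^ s * ψ (x₀ + ε ^ (p - 1) • y) := by
  have hR : 0 < ε ^ (p - 1) := by positivity
  have h1 := Measure.integral_comp_smul volume (fun z => bubble p ε x₀ (x₀ + z) ^ s * ψ (x₀ + z)) (ε ^ (p - 1))
  rw [integral_add_left_eq_self (fun z => bubble p ε x₀ z ^ s * ψ z) x₀] at h1
  have h2 : ∀ y : EuclideanSpace ℝ (Fin N), bubble p ε x₀ (x₀ + ε ^ (p - 1) • y) ^ s * ψ (x₀ + ε ^ (p - 1) • y) =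
     ε ^ (-((p - 1) * (((N : ℝ) - p) / p)) * s) * (bubble p 1 0 y ^ s * ψ (x₀ + ε ^ (p - 1) • y)) := by
    intro y
    rw [bubble_scale hp hε, Real.mul_rpow (by positivity) (bubble_pos hp hpN one_pos _ _).le,
      ← Real.rpow_mul hε.le]; ring
  simp only [h2] at h1
  rw [integral_const_mul] at h1
  have h3 : |((ε ^ (p - 1)) ^ Module.finrank ℝ (EuclideanSpace ℝ (Fin N)))⁻¹| = ε ^ (-((p - 1) * N)) := by
    rw [finrank_euclideanSpace_fin, abs_of_pos (by positivity), ← Real.rpow_natCast, ← Real.rpow_mul hε.le,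
      Real.rpow_neg hε.le]
  rw [h3, smul_eq_mul] at h1
  have h4 : ∫ x, bubble p ε x₀ x ^ s * ψ x = ε ^ ((p - 1) * N) * (ε ^ (-((p - 1) * N)) * ∫ x, bubble p ε x₀ x ^ s * ψ x) := by
    rw [← mul_assoc, ← Real.rpow_add hε, add_neg_cancel, Real.rpow_zero, one_mul]
  rw [h4, ← h1, ← mul_assoc, ← Real.rpow_add hε]
  congr 2; ring

lemma bubble_integrable_eps (hp : 2 ≤ p) (hpN : p < N) {s : ℝ} (hs : (N : ℝ) < s * ((N - p) / (p - 1)))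
    {ε : ℝ} (hε : 0 < ε) (x₀ : EuclideanSpace ℝ (Fin N)) :
    Integrable (fun x => bubble p ε x₀ x ^ s) := by
  have hR : 0 < ε ^ (p - 1) := by positivity
  have h1 : Integrable (fun y => bubble p ε x₀ (x₀ + ε ^ (p - 1) • y) ^ s) := by
    have : (fun y => bubble p ε x₀ (x₀ + ε ^ (p - 1) • y) ^ s) = fun y : EuclideanSpace ℝ (Fin N) =>
      ε ^ (-((p - 1) * (((N : ℝ) - p) / p)) * s) * bubble p 1 0 y ^ s := by
      funext y
      rw [bubble_scale hp hε, Real.mul_rpow (by positivity) (bubble_pos hp hpN one_pos _ _).le,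
        ← Real.rpow_mul hε.le]
    rw [this]
    exact (bubble_integrable hp hpN hs).const_mul _
  have h2 := (integrable_comp_smul_iff volume (fun z => bubble p ε x₀ (x₀ + z) ^ s) hR.ne').1 h1
  have h3 := h2.comp_add_left (-x₀)
  simpa using h3

lemma bubble_conc (hp : 2 ≤ p) (hpN : p < N) {s : ℝ} (hs : (N : ℝ) < s * ((N - p) / (p - 1)))
    (x₀ : EuclideanSpace ℝ (Fin N)) {ψ : EuclideanSpace ℝ (Fin N) → ℝ} (hψ : Measurable ψ)
    {M : ℝ} (hM : ∀ x, |ψ x| ≤ M) (hc : ContinuousAt ψ x₀) :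
    Tendsto (fun ε : ℝ => ∫ y, bubble p 1 0 y ^ s * ψ (x₀ + ε ^ (p - 1) • y)) (𝓝[>] 0)
      (𝓝 ((∫ y : EuclideanSpace ℝ (Fin N), bubble p 1 0 y ^ s) * ψ x₀)) := by
  rw [← integral_mul_const]
  have hi := bubble_integrable hp hpN hs
  have hb : ∀ y : EuclideanSpace ℝ (Fin N), 0 < bubble p 1 0 y := fun y => bubble_pos hp hpN one_pos 0 y
  apply tendsto_integral_filter_of_dominated_convergence (fun y => bubble p 1 0 y ^ s * M)
  · refine Eventually.of_forall fun ε => ?_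
    apply hi.1.mul
    exact (hψ.comp (by fun_prop)).aestronglyMeasurable
  · refine Eventually.of_forall fun ε => Eventually.of_forall fun y => ?_
    rw [norm_mul, Real.norm_eq_abs, abs_of_nonneg (Real.rpow_nonneg (hb y).le _)]
    exact mul_le_mul_of_nonneg_left (hM _) (Real.rpow_nonneg (hb y).le _)
  · exact hi.mul_const M
  · refine Eventually.of_forall fun y => ?_
    apply Tendsto.const_mul
    have h1 : Tendsto (fun ε : ℝ => ε ^ (p - 1)) (𝓝[>] 0) (𝓝 0) := by
      have : Tendsto (fun ε : ℝ => ε ^ (p - 1)) (𝓝 0) (𝓝 (0 ^ (p - 1))) :=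
        (Real.continuousAt_rpow_const 0 (p - 1) (Or.inr (by linarith))).tendsto
      rw [Real.zero_rpow (by linarith)] at this
      exact this.mono_left nhdsWithin_le_nhds
    have h2 : Tendsto (fun ε : ℝ => x₀ + ε ^ (p - 1) • y) (𝓝[>] 0) (𝓝 x₀) := by
      have := (h1.smul_const y).const_add x₀
      simpa using this
    exact hc.tendsto.comp h2

lemma bubble_int_translate (s : ℝ) (x₀ : EuclideanSpace ℝ (Fin N)) :
    ∫ x, bubble p 1 x₀ x ^ s = ∫ y : EuclideanSpace ℝ (Fin N), bubble p 1 0 y ^ s := by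
  have : ∀ x, bubble p 1 x₀ x = bubble p 1 0 (x - x₀) := by
    intro x; rw [bubble_eq, bubble_eq, sub_zero]
  simp only [this]
  exact integral_sub_right_eq_self (fun x => bubble p 1 0 x ^ s) x₀

lemma bubble_int_pos (hp : 2 ≤ p) (hpN : p < N) {s : ℝ} (hs : (N : ℝ) < s * ((N - p) / (p - 1))) :
    0 < ∫ y : EuclideanSpace ℝ (Fin N), bubble p 1 0 y ^ s := by
  have hb : ∀ y : EuclideanSpace ℝ (Fin N), 0 < bubble p 1 0 y := fun y => bubble_pos hp hpN one_pos 0 y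
  rw [integral_pos_iff_support_of_nonneg (fun y => Real.rpow_nonneg (hb y).le _) (bubble_integrable hp hpN hs)]
  have : Function.support (fun y : EuclideanSpace ℝ (Fin N) => bubble p 1 0 y ^ s) = Set.univ := by
    ext y; simp [(Real.rpow_pos_of_pos (hb y) s).ne']
  rw [this]
  exact isOpen_univ.measure_pos _ Set.univ_nonempty

end bub

lemma rpow_tangent {x y s : ℝ} (hx : 0 < x) (hy : 0 < y) (hs : 1 ≤ s) :
    y ^ s + s * y ^ (s - 1) * (x - y) ≤ x ^ s := by
  have h1 : -1 ≤ x / y - 1 := by have := div_pos hx hy; linarith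
  have h := one_add_mul_self_le_rpow_one_add h1 hs
  have h2 : 0 < y ^ s := Real.rpow_pos_of_pos hy s
  have h3 := mul_le_mul_of_nonneg_left h h2.le
  rw [show 1 + (x / y - 1) = x / y by ring, Real.div_rpow hx.le hy.le, mul_div_cancel₀ _ h2.ne'] at h3
  refine le_trans (le_of_eq ?_) h3
  rw [Real.rpow_sub_one hy.ne']
  field_simp

lemma rpow_diff {x y s : ℝ} (hx : 0 < x) (hy : 0 < y) (hs : 1 ≤ s) :
    |x ^ s - y ^ s| ≤ s * (y + |x - y|) ^ (s - 1) * |x - y| := by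
  have h1 := rpow_tangent hx hy hs
  have h2 := rpow_tangent hy hx hs
  have hm : 0 < y + |x - y| := by positivity
  have m1 : x ^ (s-1) ≤ (y + |x - y|) ^ (s - 1) :=
    Real.rpow_le_rpow hx.le (by linarith [le_abs_self (x - y)]) (by linarith)
  have m2 : y ^ (s-1) ≤ (y + |x - y|) ^ (s - 1) :=
    Real.rpow_le_rpow hy.le (by linarith [abs_nonneg (x - y)]) (by linarith)
  have p1 : 0 ≤ x ^ (s-1) := by positivity
  have p2 : 0 ≤ y ^ (s-1) := by positivity
  have b1 : s * x ^ (s-1) * (x - y) ≤ s * (y + |x - y|) ^ (s - 1) * |x - y| := by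
    calc s * x ^ (s-1) * (x - y) ≤ s * x ^ (s-1) * |x - y| :=
          mul_le_mul_of_nonneg_left (le_abs_self _) (by positivity)
      _ ≤ _ := by gcongr
  have b2 : s * y ^ (s-1) * (y - x) ≤ s * (y + |x - y|) ^ (s - 1) * |x - y| := by
    calc s * y ^ (s-1) * (y - x) ≤ s * y ^ (s-1) * |x - y| :=
          mul_le_mul_of_nonneg_left (by rw [abs_sub_comm]; exact le_abs_self _) (by positivity)
      _ ≤ _ := by gcongr
  rw [abs_le]
  constructor <;> nlinarith

lemma rpow_second {x y q : ℝ} (hx : 0 < x) (hy : 0 < y) (hq : 2 < q) :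
    |x ^ q - y ^ q - q * y ^ (q - 1) * (x - y)| ≤
      q * (q - 1) * 2 ^ (q - 2) * (y ^ (q - 2) * |x - y| ^ 2 + |x - y| ^ q) := by
  have h1 := rpow_tangent hx hy (s := q) (by linarith)
  have h2 := rpow_tangent hy hx (s := q) (by linarith)
  rw [abs_of_nonneg (by linarith)]
  have h3 := rpow_diff hx hy (s := q - 1) (by linarith)
  set w := |x - y| with hw
  have hw0 : 0 ≤ w := abs_nonneg _
  have h4 : x ^ q - y ^ q - q * y ^ (q - 1) * (x - y) ≤ q * (|x ^ (q-1) - y ^ (q-1)| * w) := by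
    have : (x ^ (q-1) - y ^ (q-1)) * (x - y) ≤ |x ^ (q-1) - y ^ (q-1)| * w := by
      rw [hw, ← abs_mul]; exact le_abs_self _
    nlinarith
  have h5 : (y + w) ^ (q - 2) ≤ 2 ^ (q - 2) * (y ^ (q - 2) + w ^ (q - 2)) := by
    have hyq : 0 ≤ y ^ (q - 2) := by positivity
    have hwq : 0 ≤ w ^ (q - 2) := by positivity
    rcases le_total y w with h | h
    · calc (y + w) ^ (q - 2) ≤ (2 * w) ^ (q - 2) := Real.rpow_le_rpow (by positivity) (by linarith) (by linarith)
        _ = 2 ^ (q - 2) * w ^ (q - 2) := Real.mul_rpow (by norm_num) hw0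
        _ ≤ _ := by gcongr; linarith
    · calc (y + w) ^ (q - 2) ≤ (2 * y) ^ (q - 2) := Real.rpow_le_rpow (by positivity) (by linarith) (by linarith)
        _ = 2 ^ (q - 2) * y ^ (q - 2) := Real.mul_rpow (by norm_num) hy.le
        _ ≤ _ := by gcongr; linarith
  have h6 : w ^ q = w ^ (q - 2) * w ^ 2 := by
    rw [← Real.rpow_natCast w 2, ← Real.rpow_add_of_nonneg hw0 (by linarith) (by norm_num)]
    congr 1; push_cast; ring
  rw [show q - 1 - 1 = q - 2 by ring] at h3
  calc _ ≤ q * (|x ^ (q-1) - y ^ (q-1)| * w) := h4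
    _ ≤ q * (((q - 1) * (2 ^ (q - 2) * (y ^ (q - 2) + w ^ (q - 2))) * w) * w) := by
      have hq1 : 0 ≤ q - 1 := by linarith
      have : |x ^ (q-1) - y ^ (q-1)| ≤ (q - 1) * (2 ^ (q - 2) * (y ^ (q - 2) + w ^ (q - 2))) * w :=
        h3.trans (by gcongr)
      gcongr
    _ = _ := by rw [h6]; ring

section expan
variable {N : ℕ} {p q a : ℝ}

lemma conc_set (hp : 2 ≤ p) (hpN : p < N) (ha : a = ((N:ℝ) - p) / p) (hqa : q * a = N)
    (hs : (N : ℝ) < (q - 1) * ((N - p) / (p - 1)))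
    (x₀ : EuclideanSpace ℝ (Fin N)) {T : Set (EuclideanSpace ℝ (Fin N))} (hT : MeasurableSet T)
    {ψ : EuclideanSpace ℝ (Fin N) → ℝ} (hψ : Measurable ψ)
    {M : ℝ} (hM0 : 0 ≤ M) (hM : ∀ x ∈ T, |ψ x| ≤ M) (hc : ContinuousAt (T.indicator ψ) x₀) :
    Tendsto (fun ε : ℝ => (∫ x in T, bubble p ε x₀ x ^ (q - 1) * ψ x) / ε ^ ((p - 1) * a)) (𝓝[>] 0)
      (𝓝 ((∫ y : EuclideanSpace ℝ (Fin N), bubble p 1 0 y ^ (q - 1)) * T.indicator ψ x₀)) := by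
  have h := bubble_conc hp hpN hs x₀ (ψ := T.indicator ψ) (hψ.indicator hT) (M := M) (fun x => by
    by_cases hx : x ∈ T
    · rw [Set.indicator_of_mem hx]; exact hM x hx
    · rw [Set.indicator_of_notMem hx]; simpa using hM0) hc
  refine h.congr' ?_
  filter_upwards [self_mem_nhdsWithin] with ε hε
  have hε : 0 < ε := hε
  have e1 : ∫ x in T, bubble p ε x₀ x ^ (q - 1) * ψ x = ∫ x, bubble p ε x₀ x ^ (q - 1) * T.indicator ψ x := by
    rw [← integral_indicator hT]
    congr 1; funext x
    by_cases hx : x ∈ T <;> simp [hx]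
  rw [e1, bubble_int_scale hp hpN hε, ← ha]
  have e2 : (p - 1) * (N - (q - 1) * a) = (p - 1) * a := by
    rw [← hqa]; ring
  rw [e2, mul_div_cancel_left₀]
  positivity

lemma pow_tendsto_zero {s : ℝ} (hs : 0 < s) : Tendsto (fun ε : ℝ => ε ^ s) (𝓝[>] 0) (𝓝 0) := by
  have : Tendsto (fun ε : ℝ => ε ^ s) (𝓝 0) (𝓝 (0 ^ s)) :=
    (Real.continuousAt_rpow_const 0 s (Or.inr hs.le)).tendsto
  rw [Real.zero_rpow hs.ne'] at this
  exact this.mono_left nhdsWithin_le_nhds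

lemma tail_est (hp : 2 ≤ p) (hpN : p < N) (ha : a = ((N:ℝ) - p) / p) (hqa : q * a = N)
    (hs : (N : ℝ) < (q - 1) * ((N - p) / (p - 1))) (hs' : (N : ℝ) < q * ((N - p) / (p - 1)))
    {x₀ : EuclideanSpace ℝ (Fin N)} {Ω : Set (EuclideanSpace ℝ (Fin N))} (hΩo : IsOpen Ω) (hx₀ : x₀ ∈ Ω) :
    Tendsto (fun ε : ℝ => ((∫ x in Ω, bubble p ε x₀ x ^ q) -
      ∫ y : EuclideanSpace ℝ (Fin N), bubble p 1 0 y ^ q) / ε ^ (p * a)) (𝓝[>] 0) (𝓝 0) := by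
  obtain ⟨r, hr, hrΩ⟩ := Metric.isOpen_iff.1 hΩo x₀ hx₀
  set C : ℝ := Cone N p * (1 / r ^ (p / (p - 1))) ^ (((N : ℝ) - p) / p) with hC
  have hcont : ContinuousAt (Ωᶜ.indicator (fun _ => (1:ℝ))) x₀ := by
    have : Ωᶜ.indicator (fun _ => (1:ℝ)) =ᶠ[𝓝 x₀] fun _ => 0 := by
      filter_upwards [hΩo.mem_nhds hx₀] with x hx
      simp [hx]
    exact continuousAt_const.congr this.symm
  have h1 := conc_set hp hpN ha hqa hs x₀ hΩo.measurableSet.compl (ψ := fun _ => 1) measurable_const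
    (M := 1) zero_le_one (fun _ _ => by simp) hcont
  have h2 := h1.const_mul C
  have h3 : Ωᶜ.indicator (fun _ => (1:ℝ)) x₀ = 0 := by simp [hx₀]
  rw [h3, mul_zero, mul_zero] at h2
  refine squeeze_zero_norm' ?_ h2
  filter_upwards [self_mem_nhdsWithin] with ε hε
  have hε : 0 < ε := hε
  have hb : ∀ x, 0 < bubble p ε x₀ x := fun x => bubble_pos hp hpN hε x₀ x
  have hA : ∫ y : EuclideanSpace ℝ (Fin N), bubble p 1 0 y ^ q = ∫ x, bubble p ε x₀ x ^ q := by
    have := bubble_int_scale hp hpN hε q x₀ (fun _ => 1)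
    rw [← ha, hqa] at this
    simpa using this.symm
  have hi : Integrable (fun x => bubble p ε x₀ x ^ q) := bubble_integrable_eps hp hpN hs' hε x₀
  have hi1 : Integrable (fun x => bubble p ε x₀ x ^ (q-1)) := bubble_integrable_eps hp hpN hs hε x₀
  have hsplit := integral_add_compl hΩo.measurableSet hi
  have e : (∫ x in Ω, bubble p ε x₀ x ^ q) - ∫ x, bubble p ε x₀ x ^ q = - ∫ x in Ωᶜ, bubble p ε x₀ x ^ q := by
    linarith
  rw [hA, e, norm_div, norm_neg, Real.norm_eq_abs, Real.norm_eq_abs,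
    abs_of_nonneg (integral_nonneg fun x => Real.rpow_nonneg (hb x).le _),
    abs_of_pos (a := ε ^ (p * a)) (by positivity)]
  have e2 : ε ^ (p * a) = ε ^ a * ε ^ ((p - 1) * a) := by
    rw [← Real.rpow_add hε]; congr 1; ring
  have hle : ∫ x in Ωᶜ, bubble p ε x₀ x ^ q ≤ C * ε ^ a * ∫ x in Ωᶜ, bubble p ε x₀ x ^ (q - 1) * 1 := by
    rw [← integral_const_mul]
    apply setIntegral_mono_on hi.integrableOn
    · simp only [mul_one]; exact (hi1.integrableOn).const_mul _
    · exact hΩo.measurableSet.compl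
    · intro x hx
      have hxr : r ≤ ‖x - x₀‖ := by
        by_contra h
        apply hx
        apply hrΩ
        rw [Metric.mem_ball, dist_eq_norm]; linarith
      have hbl := bubble_le hp hpN hε hr x₀ x hxr
      rw [← hC, ← ha] at hbl
      have : bubble p ε x₀ x ^ q = bubble p ε x₀ x * bubble p ε x₀ x ^ (q - 1) := by
        rw [Real.rpow_sub_one (hb x).ne']; field_simp [(hb x).ne']
      rw [this, mul_one]
      exact mul_le_mul_of_nonneg_right hbl (Real.rpow_nonneg (hb x).le _)
  rw [e2, div_le_iff₀ (by positivity)]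
  refine hle.trans (le_of_eq ?_)
  have : ε ^ ((p - 1) * a) ≠ 0 := by positivity
  field_simp

lemma final_asymp {l : Filter ℝ} {t Nn D : ℝ → ℝ} {A L n κ : ℝ} (hA : 0 < A)
    (ht : Tendsto t l (𝓝 0)) (htpos : ∀ᶠ ε in l, 0 < t ε)
    (hn : Tendsto (fun ε => (Nn ε - A) / t ε) l (𝓝 L))
    (hd : Tendsto (fun ε => (D ε - A) / t ε) l (𝓝 (n * L))) :
    Tendsto (fun ε => (Nn ε / D ε ^ κ - (A ^ (1 - κ) - (κ * n - 1) * A ^ (-κ) * L * t ε)) / t ε) l (𝓝 0) := by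
  have hDA : Tendsto D l (𝓝 A) := by
    have h1 := (hd.mul ht).add_const A
    rw [mul_zero, zero_add] at h1
    refine h1.congr' ?_
    filter_upwards [htpos] with ε hε
    rw [div_mul_cancel₀ _ hε.ne']; ring
  set f : ℝ → ℝ := fun x => x ^ (-κ) with hf
  have hfd : HasDerivAt f (-κ * A ^ (-κ - 1)) A := Real.hasDerivAt_rpow_const (Or.inl hA.ne')
  have hds : Tendsto (fun ε => dslope f A (D ε)) l (𝓝 (-κ * A ^ (-κ - 1))) := by
    have h1 : ContinuousAt (dslope f A) A := continuousAt_dslope_same.2 hfd.differentiableAt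
    have h2 : dslope f A A = -κ * A ^ (-κ - 1) := by rw [dslope_same, hfd.deriv]
    rw [← h2]
    exact h1.tendsto.comp hDA
  have hfD : Tendsto (fun ε => f (D ε)) l (𝓝 (f A)) := hfd.continuousAt.tendsto.comp hDA
  have h3 := (hn.mul hfD).add ((hds.mul hd).const_mul A)
  have h4 := h3.add_const ((κ * n - 1) * A ^ (-κ) * L)
  have h5 : L * f A + A * (-κ * A ^ (-κ - 1) * (n * L)) + (κ * n - 1) * A ^ (-κ) * L = 0 := by
    simp only [hf]
    rw [Real.rpow_sub_one hA.ne']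
    field_simp
    ring
  rw [h5] at h4
  refine h4.congr' ?_
  filter_upwards [htpos, hDA.eventually (lt_mem_nhds hA)] with ε hε hD
  have h6 : dslope f A (D ε) * (D ε - A) = f (D ε) - f A := by
    rw [mul_comm]; exact sub_smul_dslope f A (D ε)
  have h7 : dslope f A (D ε) * ((D ε - A) / t ε) = (f (D ε) - f A) / t ε := by
    rw [← mul_div_assoc, h6]
  have h8 : Nn ε / D ε ^ κ = Nn ε * f (D ε) := by
    simp only [hf]; rw [Real.rpow_neg hD.le, div_eq_mul_inv]
  have h9 : A ^ (1 - κ) = A * f A := by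
    simp only [hf]; rw [sub_eq_add_neg, Real.rpow_add hA, Real.rpow_one]
  rw [h7, h8, h9]
  field_simp
  ring

lemma main_asymp (hp : 2 ≤ p) (hpN : p < N) (ha : a = ((N:ℝ) - p) / p) (ha0 : 0 < a) (hqa : q * a = N)
    (hq : 2 < q)
    (hs2 : (N : ℝ) < (q - 2) * ((N - p) / (p - 1)))
    (hs : (N : ℝ) < (q - 1) * ((N - p) / (p - 1))) (hs' : (N : ℝ) < q * ((N - p) / (p - 1)))
    {x₀ : EuclideanSpace ℝ (Fin N)} {Ω : Set (EuclideanSpace ℝ (Fin N))} (hΩo : IsOpen Ω)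
    (hΩb : Bornology.IsBounded Ω) (hx₀ : x₀ ∈ Ω)
    {H : EuclideanSpace ℝ (Fin N) → ℝ} {c : ℝ} (hc : 0 < c)
    (hHbd : ∃ M, ∀ x ∈ Ω, |H x| ≤ M)
    (hHolder : ∃ C : ℝ, ∃ α ∈ Set.Ioo (0 : ℝ) 1, ∀ x ∈ Ω,
      |H x - H x₀| ≤ C * ‖x - x₀‖ ^ α)
    {PU : ℝ → EuclideanSpace ℝ (Fin N) → ℝ}
    (hPUpos : ∀ ε : ℝ, 0 < ε → ∀ x ∈ Ω, 0 < PU ε x)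
    (hPUc : ∀ ε : ℝ, 0 < ε → ContinuousOn (PU ε) (closure Ω))
    (hexp : ∀ δ : ℝ, 0 < δ → ∀ᶠ ε in 𝓝[>] (0 : ℝ), ∀ x ∈ Ω,
      |PU ε x - bubble p ε x₀ x - c * ε ^ a * H x| ≤ δ * ε ^ a) :
    Tendsto (fun ε : ℝ => ((∫ x in Ω, bubble p ε x₀ x ^ (q - 1) * PU ε x) -
      ∫ y : EuclideanSpace ℝ (Fin N), bubble p 1 0 y ^ q) / ε ^ (p * a)) (𝓝[>] 0)
      (𝓝 ((∫ y : EuclideanSpace ℝ (Fin N), bubble p 1 0 y ^ (q - 1)) * c * H x₀)) ∧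
    Tendsto (fun ε : ℝ => ((∫ x in Ω, PU ε x ^ q) -
      ∫ y : EuclideanSpace ℝ (Fin N), bubble p 1 0 y ^ q) / ε ^ (p * a)) (𝓝[>] 0)
      (𝓝 (q * ((∫ y : EuclideanSpace ℝ (Fin N), bubble p 1 0 y ^ (q - 1)) * c * H x₀))) := by
  have hm := hΩo.measurableSet
  have hfin : volume Ω ≠ ⊤ := hΩb.measure_lt_top.ne
  set B := ∫ y : EuclideanSpace ℝ (Fin N), bubble p 1 0 y ^ (q - 1) with hB
  have hBpos : 0 < B := bubble_int_pos hp hpN hs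
  obtain ⟨M, hM⟩ := hHbd
  obtain ⟨C, α, hα, hCα⟩ := hHolder
  obtain ⟨R, hR⟩ := hΩb.subset_closedBall x₀
  have hR0 : 0 ≤ R := by have := hR hx₀; simpa using this
  have hint : ∀ f : EuclideanSpace ℝ (Fin N) → ℝ, ContinuousOn f (closure Ω) → IntegrableOn f Ω :=
    fun f hf => (hf.integrableOn_compact hΩb.isCompact_closure).mono_set subset_closure
  have hUc : ∀ ε : ℝ, 0 < ε → ∀ s : ℝ, Continuous (fun x => bubble p ε x₀ x ^ s) := fun ε hε s =>
    (bubble_continuous hp hε x₀).rpow_const (fun x => Or.inl (bubble_pos hp hpN hε x₀ x).ne')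
  have ti := tail_est hp hpN ha hqa hs hs' hΩo hx₀
  have esplit : ∀ ε : ℝ, 0 < ε → ε ^ (p * a) = ε ^ a * ε ^ ((p - 1) * a) := fun ε hε => by
    rw [← Real.rpow_add hε]; congr 1; ring
  -- concentration
  have c1 : Tendsto (fun ε : ℝ => (∫ x in Ω, bubble p ε x₀ x ^ (q - 1) * 1) / ε ^ ((p - 1) * a)) (𝓝[>] 0)
      (𝓝 B) := by
    have hcont : ContinuousAt (Ω.indicator (fun _ => (1:ℝ))) x₀ := by
      have : Ω.indicator (fun _ => (1:ℝ)) =ᶠ[𝓝 x₀] fun _ => 1 := by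
        filter_upwards [hΩo.mem_nhds hx₀] with x hx
        simp [hx]
      exact continuousAt_const.congr this.symm
    have := conc_set hp hpN ha hqa hs x₀ hm (ψ := fun _ => 1) measurable_const
      (M := 1) zero_le_one (fun _ _ => by simp) hcont
    rw [Set.indicator_of_mem hx₀, mul_one] at this
    exact this
  have hψc : Continuous (fun x => C * ‖x - x₀‖ ^ α) :=
    continuous_const.mul (((continuous_id.sub continuous_const).norm).rpow_const (fun _ => Or.inr hα.1.le))
  have c2 : Tendsto (fun ε : ℝ => (∫ x in Ω, bubble p ε x₀ x ^ (q - 1) * (C * ‖x - x₀‖ ^ α)) / ε ^ ((p - 1) * a))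
      (𝓝[>] 0) (𝓝 0) := by
    have hcont : ContinuousAt (Ω.indicator (fun x => C * ‖x - x₀‖ ^ α)) x₀ := by
      have : Ω.indicator (fun x => C * ‖x - x₀‖ ^ α) =ᶠ[𝓝 x₀] fun x => C * ‖x - x₀‖ ^ α := by
        filter_upwards [hΩo.mem_nhds hx₀] with x hx
        simp [hx]
      exact hψc.continuousAt.congr this.symm
    have := conc_set hp hpN ha hqa hs x₀ hm (ψ := fun x => C * ‖x - x₀‖ ^ α) hψc.measurable
      (M := |C| * R ^ α) (by positivity) (fun x hx => by
        have := hR hx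
        rw [Metric.mem_closedBall, dist_eq_norm] at this
        rw [abs_mul, abs_of_nonneg (a := ‖x - x₀‖ ^ α) (by positivity)]
        exact mul_le_mul_of_nonneg_left (Real.rpow_le_rpow (norm_nonneg _) this hα.1.le) (abs_nonneg _)) hcont
    rw [Set.indicator_of_mem hx₀, sub_self, norm_zero, Real.zero_rpow hα.1.ne', mul_zero, mul_zero] at this
    exact this
  -- first order term
  have tii : Tendsto (fun ε : ℝ => (∫ x in Ω, bubble p ε x₀ x ^ (q - 1) * (PU ε x - bubble p ε x₀ x)) / ε ^ (p * a))
      (𝓝[>] 0) (𝓝 (B * c * H x₀)) := by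
    have hdiff : Tendsto (fun ε : ℝ => (∫ x in Ω, bubble p ε x₀ x ^ (q - 1) * (PU ε x - bubble p ε x₀ x)) / ε ^ (p * a)
        - c * H x₀ * ((∫ x in Ω, bubble p ε x₀ x ^ (q - 1) * 1) / ε ^ ((p - 1) * a))) (𝓝[>] 0) (𝓝 0) := by
      rw [Metric.tendsto_nhds]
      intro η hη
      set δ := η / (2 * B) with hδ
      have hδ0 : 0 < δ := by positivity
      have hlim := (c1.const_mul δ).add (c2.const_mul c)
      have hlt : δ * B + c * 0 < η := by
        rw [hδ, mul_zero, add_zero]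
        have : η / (2 * B) * B = η / 2 := by field_simp
        rw [this]; linarith
      filter_upwards [hexp δ hδ0, hlim.eventually (gt_mem_nhds hlt), self_mem_nhdsWithin] with ε h1 h2 hε
      have hε : 0 < ε := hε
      rw [dist_zero_right, Real.norm_eq_abs]
      refine lt_of_le_of_lt ?_ h2
      have e0 : ε ^ a ≠ 0 := by positivity
      have e1 : ε ^ ((p - 1) * a) ≠ 0 := by positivity
      have cU := hUc ε hε (q - 1)
      have cW : ContinuousOn (fun x => PU ε x - bubble p ε x₀ x) (closure Ω) :=
        (hPUc ε hε).sub (bubble_continuous hp hε x₀).continuousOn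
      have i1 : IntegrableOn (fun x => bubble p ε x₀ x ^ (q - 1) * (PU ε x - bubble p ε x₀ x)) Ω :=
        hint _ (cU.continuousOn.mul cW)
      have i2 : IntegrableOn (fun x => bubble p ε x₀ x ^ (q - 1) * 1) Ω :=
        hint _ (cU.continuousOn.mul continuousOn_const)
      have i3 : IntegrableOn (fun x => bubble p ε x₀ x ^ (q - 1) * (C * ‖x - x₀‖ ^ α)) Ω :=
        hint _ (cU.mul hψc).continuousOn
      have key : |(∫ x in Ω, bubble p ε x₀ x ^ (q - 1) * (PU ε x - bubble p ε x₀ x)) -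
          c * H x₀ * ε ^ a * ∫ x in Ω, bubble p ε x₀ x ^ (q - 1) * 1| ≤
          δ * ε ^ a * (∫ x in Ω, bubble p ε x₀ x ^ (q - 1) * 1) +
          c * ε ^ a * ∫ x in Ω, bubble p ε x₀ x ^ (q - 1) * (C * ‖x - x₀‖ ^ α) := by
        rw [← integral_const_mul, ← integral_const_mul, ← integral_const_mul,
          ← integral_sub i1 (i2.const_mul _), ← integral_add (i2.const_mul _) (i3.const_mul _)]
        refine (abs_integral_le_integral_abs).trans ?_
        apply setIntegral_mono_on (i1.sub (i2.const_mul _)).abs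
          ((i2.const_mul _).add (i3.const_mul _)) hm
        intro x hx
        have hb := Real.rpow_nonneg (bubble_pos hp hpN hε x₀ x).le (q - 1)
        have e3 : bubble p ε x₀ x ^ (q - 1) * (PU ε x - bubble p ε x₀ x) -
          c * H x₀ * ε ^ a * (bubble p ε x₀ x ^ (q - 1) * 1) = bubble p ε x₀ x ^ (q - 1) *
            ((PU ε x - bubble p ε x₀ x - c * ε ^ a * H x) + c * ε ^ a * (H x - H x₀)) := by ring
        have e4 : δ * ε ^ a * (bubble p ε x₀ x ^ (q - 1) * 1) + c * ε ^ a * (bubble p ε x₀ x ^ (q - 1) * (C * ‖x - x₀‖ ^ α))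
          = bubble p ε x₀ x ^ (q - 1) * (δ * ε ^ a + c * ε ^ a * (C * ‖x - x₀‖ ^ α)) := by ring
        simp only [Pi.sub_apply, Pi.add_apply]
        rw [e3, e4, abs_mul, abs_of_nonneg hb]
        apply mul_le_mul_of_nonneg_left _ hb
        refine (abs_add_le _ _).trans (add_le_add (h1 x hx) ?_)
        rw [abs_mul, abs_of_pos (a := c * ε ^ a) (by positivity)]
        exact mul_le_mul_of_nonneg_left (hCα x hx) (by positivity)
      rw [esplit ε hε]
      have e5 : (∫ x in Ω, bubble p ε x₀ x ^ (q - 1) * (PU ε x - bubble p ε x₀ x)) / (ε ^ a * ε ^ ((p - 1) * a))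
        - c * H x₀ * ((∫ x in Ω, bubble p ε x₀ x ^ (q - 1) * 1) / ε ^ ((p - 1) * a)) =
        ((∫ x in Ω, bubble p ε x₀ x ^ (q - 1) * (PU ε x - bubble p ε x₀ x)) -
          c * H x₀ * ε ^ a * ∫ x in Ω, bubble p ε x₀ x ^ (q - 1) * 1) / (ε ^ a * ε ^ ((p - 1) * a)) := by
        field_simp
      rw [e5, abs_div, abs_of_pos (a := ε ^ a * ε ^ ((p - 1) * a)) (by positivity), div_le_iff₀ (by positivity)]
      refine key.trans (le_of_eq ?_)
      generalize (∫ x in Ω, bubble p ε x₀ x ^ (q - 1) * 1) = X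
      generalize (∫ x in Ω, bubble p ε x₀ x ^ (q - 1) * (C * ‖x - x₀‖ ^ α)) = Y
      field_simp
    have := hdiff.add (c1.const_mul (c * H x₀))
    rw [zero_add, show c * H x₀ * B = B * c * H x₀ by ring] at this
    refine this.congr fun ε => ?_
    ring
  -- second order term
  have tiii : Tendsto (fun ε : ℝ => (∫ x in Ω, (PU ε x ^ q - bubble p ε x₀ x ^ q -
      q * bubble p ε x₀ x ^ (q - 1) * (PU ε x - bubble p ε x₀ x))) / ε ^ (p * a)) (𝓝[>] 0) (𝓝 0) := by
    set M' : ℝ := 1 + c * |M| with hM'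
    have hM'0 : 0 < M' := by positivity
    set I2 := ∫ y : EuclideanSpace ℝ (Fin N), bubble p 1 0 y ^ (q - 2) with hI2
    set k := q * (q - 1) * 2 ^ (q - 2) with hk
    have hk0 : 0 ≤ k := by
      have : 0 < q - 1 := by linarith
      positivity
    have hpa : 0 < p * a := by have : 0 < p := by linarith
                               positivity
    have hlim : Tendsto (fun ε : ℝ => k * (M' ^ 2 * I2 * ε ^ (p * a) + M' ^ q * volume.real Ω * ε ^ p)) (𝓝[>] 0)
        (𝓝 (k * (M' ^ 2 * I2 * 0 + M' ^ q * volume.real Ω * 0))) :=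
      (((pow_tendsto_zero hpa).const_mul _).add ((pow_tendsto_zero (by linarith)).const_mul _)).const_mul k
    rw [mul_zero, mul_zero, add_zero, mul_zero] at hlim
    refine squeeze_zero_norm' ?_ hlim
    filter_upwards [hexp 1 one_pos, self_mem_nhdsWithin] with ε h1 hε
    have hε : 0 < ε := hε
    have hW : ∀ x ∈ Ω, |PU ε x - bubble p ε x₀ x| ≤ M' * ε ^ a := by
      intro x hx
      have h2 := h1 x hx
      have h3 := abs_sub_abs_le_abs_sub (PU ε x - bubble p ε x₀ x) (c * ε ^ a * H x)
      have h4 : |c * ε ^ a * H x| ≤ c * ε ^ a * |M| := by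
        rw [abs_mul, abs_of_pos (a := c * ε ^ a) (by positivity)]
        exact mul_le_mul_of_nonneg_left ((hM x hx).trans (le_abs_self _)) (by positivity)
      rw [hM']; nlinarith
    have iU2 : Integrable (fun x => bubble p ε x₀ x ^ (q - 2)) := bubble_integrable_eps hp hpN hs2 hε x₀
    have eU2 : ∫ x, bubble p ε x₀ x ^ (q - 2) = ε ^ (2 * ((p - 1) * a)) * I2 := by
      have := bubble_int_scale hp hpN hε (q - 2) x₀ (fun _ => 1)
      rw [← ha] at this
      simp only [mul_one] at this
      rw [this]
      congr 2
      rw [← hqa]; ring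
    have ibd : IntegrableOn (fun x => k * (bubble p ε x₀ x ^ (q - 2) * (M' * ε ^ a) ^ 2 + (M' * ε ^ a) ^ q)) Ω :=
      ((iU2.integrableOn.mul_const _).add (integrableOn_const hfin)).const_mul k
    have hpt : ∀ x ∈ Ω, ‖PU ε x ^ q - bubble p ε x₀ x ^ q -
      q * bubble p ε x₀ x ^ (q - 1) * (PU ε x - bubble p ε x₀ x)‖ ≤
        k * (bubble p ε x₀ x ^ (q - 2) * (M' * ε ^ a) ^ 2 + (M' * ε ^ a) ^ q) := by
      intro x hx
      have hb := bubble_pos hp hpN hε x₀ x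
      refine (rpow_second (hPUpos ε hε x hx) hb hq).trans ?_
      apply mul_le_mul_of_nonneg_left _ hk0
      have w := hW x hx
      apply add_le_add
      · apply mul_le_mul_of_nonneg_left _ (Real.rpow_nonneg hb.le _)
        exact pow_le_pow_left₀ (abs_nonneg _) w 2
      · exact Real.rpow_le_rpow (abs_nonneg _) w (by linarith)
    have hnorm : ‖∫ x in Ω, (PU ε x ^ q - bubble p ε x₀ x ^ q -
      q * bubble p ε x₀ x ^ (q - 1) * (PU ε x - bubble p ε x₀ x))‖ ≤
        k * ((ε ^ (2 * ((p - 1) * a)) * I2) * (M' * ε ^ a) ^ 2 + volume.real Ω * (M' * ε ^ a) ^ q) := by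
      refine (norm_integral_le_of_norm_le ibd ?_).trans ?_
      · filter_upwards [ae_restrict_mem hm] with x hx using hpt x hx
      · rw [integral_const_mul, integral_add (iU2.integrableOn.mul_const _) (integrableOn_const hfin),
          integral_mul_const, setIntegral_const, smul_eq_mul]
        apply mul_le_mul_of_nonneg_left _ hk0
        apply add_le_add_left
        apply mul_le_mul_of_nonneg_right _ (by positivity)
        rw [← eU2]
        exact setIntegral_le_integral iU2 (Eventually.of_forall fun x =>
          Real.rpow_nonneg (bubble_pos hp hpN hε x₀ x).le _)
    rw [norm_div, Real.norm_eq_abs (ε ^ (p * a)), abs_of_pos (a := ε ^ (p * a)) (by positivity), div_le_iff₀ (by positivity)]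
    refine hnorm.trans (le_of_eq ?_)
    have f1 : (M' * ε ^ a) ^ q = M' ^ q * (ε ^ p * ε ^ (p * a)) := by
      rw [Real.mul_rpow hM'0.le (by positivity), ← Real.rpow_mul hε.le, ← Real.rpow_add hε]
      congr 2
      rw [mul_comm a q, hqa, ha]
      have : p ≠ 0 := by linarith
      field_simp; ring
    have f2 : ε ^ (2 * ((p - 1) * a)) * (ε ^ a) ^ 2 = ε ^ (p * a) * ε ^ (p * a) := by
      rw [← Real.rpow_natCast, ← Real.rpow_mul hε.le, ← Real.rpow_add hε, ← Real.rpow_add hε]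
      congr 1; push_cast; ring
    rw [f1, mul_pow]
    linear_combination (k * I2 * M' ^ 2) * f2
  constructor
  · have := ti.add tii
    rw [zero_add] at this
    refine this.congr' ?_
    filter_upwards [self_mem_nhdsWithin] with ε hε
    have hε : 0 < ε := hε
    have cW : ContinuousOn (fun x => PU ε x - bubble p ε x₀ x) (closure Ω) :=
      (hPUc ε hε).sub (bubble_continuous hp hε x₀).continuousOn
    have i1 : IntegrableOn (fun x => bubble p ε x₀ x ^ (q - 1) * (PU ε x - bubble p ε x₀ x)) Ω :=
      hint _ ((hUc ε hε _).continuousOn.mul cW)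
    have i2 : IntegrableOn (fun x => bubble p ε x₀ x ^ q) Ω := hint _ (hUc ε hε _).continuousOn
    have e : ∫ x in Ω, bubble p ε x₀ x ^ (q - 1) * PU ε x = (∫ x in Ω, bubble p ε x₀ x ^ q) +
        ∫ x in Ω, bubble p ε x₀ x ^ (q - 1) * (PU ε x - bubble p ε x₀ x) := by
      rw [← integral_add i2 i1]
      congr 1; funext x
      have hb := bubble_pos hp hpN hε x₀ x
      rw [Real.rpow_sub_one hb.ne']
      field_simp
      ring
    rw [e]; ring
  · have := (ti.add (tii.const_mul q)).add tiii
    rw [zero_add, add_zero] at this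
    refine this.congr' ?_
    filter_upwards [self_mem_nhdsWithin] with ε hε
    have hε : 0 < ε := hε
    have cW : ContinuousOn (fun x => PU ε x - bubble p ε x₀ x) (closure Ω) :=
      (hPUc ε hε).sub (bubble_continuous hp hε x₀).continuousOn
    have i1 : IntegrableOn (fun x => bubble p ε x₀ x ^ (q - 1) * (PU ε x - bubble p ε x₀ x)) Ω :=
      hint _ ((hUc ε hε _).continuousOn.mul cW)
    have i2 : IntegrableOn (fun x => bubble p ε x₀ x ^ q) Ω := hint _ (hUc ε hε _).continuousOn
    have i3 : IntegrableOn (fun x => PU ε x ^ q) Ω :=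
      hint _ ((hPUc ε hε).rpow_const (fun x _ => Or.inr (by linarith)))
    have i1' : IntegrableOn (fun x => q * bubble p ε x₀ x ^ (q - 1) * (PU ε x - bubble p ε x₀ x)) Ω := by
      simp only [mul_assoc]; exact i1.const_mul q
    have e : ∫ x in Ω, (PU ε x ^ q - bubble p ε x₀ x ^ q -
      q * bubble p ε x₀ x ^ (q - 1) * (PU ε x - bubble p ε x₀ x)) = (∫ x in Ω, PU ε x ^ q) -
        (∫ x in Ω, bubble p ε x₀ x ^ q) - q * ∫ x in Ω, bubble p ε x₀ x ^ (q - 1) * (PU ε x - bubble p ε x₀ x) := by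
      have i32 : IntegrableOn (fun x => PU ε x ^ q - bubble p ε x₀ x ^ q) Ω := i3.sub i2
      rw [integral_sub i32 i1', integral_sub i3 i2]
      simp only [mul_assoc]
      rw [integral_const_mul]
    rw [e]; ring

end expan

/-- if the regular part `H = G_λ(·,x₀) - Γ(·,x₀)` of the Green function
is bounded, `α`-Hölder at `x₀` and `H(x₀) > 0`, and `PU_{ε,x₀}` admits the uniform
expansion `PU_{ε,x₀} = U_{ε,x₀} + (C₁/C₀) ε^{(N-p)/p} H + o(ε^{(N-p)/p})`, then
`Q_λ(PU_{ε,x₀}) = S₀ - (p-1) S₀^{(p-N)/p} (∫ U₁^{p^*-1}) (C₁/C₀) ε^{N-p} H(x₀)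
 + o(ε^{N-p})` as `ε → 0⁺`, and consequently `S_λ < S₀`,
where `S₀ = (∫ U₁^{p^*})^{p/N}`. -/
theorem energy_expansion_and_Slam_lt_S0 (N : ℕ) (p lam : ℝ)
    (hp : 2 ≤ p) (hpN : p < N) (hN2p : (N : ℝ) < 2 * p)
    (Ω : Set (EuclideanSpace ℝ (Fin N))) (hΩo : IsOpen Ω) (hΩc : IsConnected Ω)
    (hΩb : Bornology.IsBounded Ω)
    (hlam : 0 < lam) (hlam1 : lam < lamOne Ω p)
    (x₀ : EuclideanSpace ℝ (Fin N)) (hx₀ : x₀ ∈ Ω)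
    (G H : EuclideanSpace ℝ (Fin N) → ℝ)
    (hGH : ∀ x, H x = G x - Czero N p * ‖x - x₀‖ ^ (-(((N : ℝ) - p) / (p - 1))))
    (hGsol : ∀ x ∈ Ω, x ≠ x₀ → -pLap p G x = lam * G x ^ (p - 1))
    (hGpos : ∀ x ∈ Ω, x ≠ x₀ → 0 < G x) (hGbd : ∀ x ∈ frontier Ω, G x = 0)
    (hHbd : ∃ M, ∀ x ∈ Ω, |H x| ≤ M)
    (hHolder : ∃ C : ℝ, ∃ α ∈ Set.Ioo (0 : ℝ) 1, ∀ x ∈ Ω,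
      |H x - H x₀| ≤ C * ‖x - x₀‖ ^ α)
    (hHpos : 0 < H x₀)
    (PU : ℝ → EuclideanSpace ℝ (Fin N) → ℝ)
    (hPUsol : ∀ ε : ℝ, 0 < ε → ∀ x ∈ Ω,
      -pLap p (PU ε) x = lam * PU ε x ^ (p - 1) +
        bubble p ε x₀ x ^ ((N : ℝ) * p / ((N : ℝ) - p) - 1))
    (hPUpos : ∀ ε : ℝ, 0 < ε → ∀ x ∈ Ω, 0 < PU ε x)
    (hPUzero : ∀ ε : ℝ, 0 < ε → ∀ x ∉ Ω, PU ε x = 0)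
    (hPUreg : ∀ ε : ℝ, 0 < ε → ContDiffOn ℝ 1 (PU ε) (closure Ω))
    (hexp : ∀ δ : ℝ, 0 < δ → ∀ᶠ ε in 𝓝[>] (0 : ℝ), ∀ x ∈ Ω,
      |PU ε x - bubble p ε x₀ x -
          (Cone N p / Czero N p) * ε ^ (((N : ℝ) - p) / p) * H x| ≤
        δ * ε ^ (((N : ℝ) - p) / p)) :
    (fun ε : ℝ => Qfun Ω p lam (PU ε) -
        ((∫ x, bubble p 1 x₀ x ^ ((N : ℝ) * p / ((N : ℝ) - p))) ^ (p / N) -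
          (p - 1) *
            ((∫ x, bubble p 1 x₀ x ^ ((N : ℝ) * p / ((N : ℝ) - p))) ^ (p / N))
              ^ ((p - N) / p) *
            (∫ x, bubble p 1 x₀ x ^ ((N : ℝ) * p / ((N : ℝ) - p) - 1)) *
            (Cone N p / Czero N p) * ε ^ ((N : ℝ) - p) * H x₀))
      =o[𝓝[>] (0 : ℝ)] (fun ε : ℝ => ε ^ ((N : ℝ) - p)) ∧
    Sfun Ω p lam <
      (∫ x, bubble p 1 x₀ x ^ ((N : ℝ) * p / ((N : ℝ) - p))) ^ (p / N) := by
  have hp0 : 0 < p := by linarith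
  have hN0 : (0:ℝ) < N := by linarith
  have hNp : 0 < (N:ℝ) - p := by linarith
  have hp1 : 0 < p - 1 := by linarith
  have hNN : 0 < N := by exact_mod_cast hN0
  have hm := hΩo.measurableSet
  simp only [bubble_int_translate]
  set q : ℝ := (N : ℝ) * p / ((N : ℝ) - p) with hqdef
  set a : ℝ := ((N : ℝ) - p) / p with ha
  set c : ℝ := Cone N p / Czero N p with hc
  have hc0 : 0 < c := div_pos (Cone_pos hp hpN) (Czero_pos hp hpN)
  have ha0 : 0 < a := by positivity
  have hqa : q * a = N := by rw [hqdef, ha]; field_simp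
  have hpa : p * a = N - p := by rw [ha]; field_simp
  have hq : 2 < q := by
    rw [hqdef, lt_div_iff₀ hNp]; nlinarith
  have hs2 : (N : ℝ) < (q - 2) * ((N - p) / (p - 1)) := by
    have : (q - 2) * ((N - p) / (p - 1)) = N + (2 * p - N) / (p - 1) := by
      rw [hqdef]; field_simp; ring
    rw [this]
    have : 0 < (2 * p - N) / (p - 1) := div_pos (by linarith) hp1
    linarith
  have hr : 0 < ((N:ℝ) - p) / (p - 1) := by positivity
  have hs : (N : ℝ) < (q - 1) * ((N - p) / (p - 1)) := by nlinarith
  have hs' : (N : ℝ) < q * ((N - p) / (p - 1)) := by nlinarith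
  have hPUc : ∀ ε : ℝ, 0 < ε → ContinuousOn (PU ε) (closure Ω) := fun ε hε => (hPUreg ε hε).continuousOn
  obtain ⟨t1, t2⟩ := main_asymp hp hpN ha ha0 hqa hq hs2 hs hs' hΩo hΩb hx₀ hc0 hHbd hHolder hPUpos hPUc hexp
  set A := ∫ y : EuclideanSpace ℝ (Fin N), bubble p 1 0 y ^ q with hA
  set B := ∫ y : EuclideanSpace ℝ (Fin N), bubble p 1 0 y ^ (q - 1) with hB
  have hA0 : 0 < A := bubble_int_pos hp hpN hs'
  have hB0 : 0 < B := bubble_int_pos hp hpN hs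
  have hint : ∀ f : EuclideanSpace ℝ (Fin N) → ℝ, ContinuousOn f (closure Ω) → IntegrableOn f Ω :=
    fun f hf => (hf.integrableOn_compact hΩb.isCompact_closure).mono_set subset_closure
  have hEn : ∀ ε : ℝ, 0 < ε → IntegrableOn (fun x => ‖gradient (PU ε) x‖ ^ p) Ω ∧
      (∫ x in Ω, ‖gradient (PU ε) x‖ ^ p) - lam * ∫ x in Ω, |PU ε x| ^ p =
        ∫ x in Ω, bubble p ε x₀ x ^ (q - 1) * PU ε x := by
    intro ε hε
    have cU : Continuous (fun x => bubble p ε x₀ x ^ (q - 1)) :=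
      (bubble_continuous hp hε x₀).rpow_const (fun x => Or.inl (bubble_pos hp hpN hε x₀ x).ne')
    have cP : ContinuousOn (fun x => PU ε x ^ (p - 1)) (closure Ω) :=
      (hPUc ε hε).rpow_const (fun x _ => Or.inr hp1.le)
    have cg : ContinuousOn (fun x => lam * PU ε x ^ (p - 1) + bubble p ε x₀ x ^ (q - 1)) (closure Ω) :=
      (continuousOn_const.mul cP).add cU.continuousOn
    obtain ⟨h1, h2⟩ := energy_identity hNN hp hΩo hΩb (hPUreg ε hε) (hPUzero ε hε) (hPUpos ε hε)
      (cg.mono subset_closure) (fun x hx => by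
        have := hPUpos ε hε x hx
        have := bubble_pos hp hpN hε x₀ x
        positivity) (hPUsol ε hε) (hint _ (cg.mul (hPUc ε hε)))
    refine ⟨h1, ?_⟩
    have i1 : IntegrableOn (fun x => lam * |PU ε x| ^ p) Ω :=
      hint _ (continuousOn_const.mul ((hPUc ε hε).abs.rpow_const (fun x _ => Or.inr hp0.le)))
    have i2 : IntegrableOn (fun x => bubble p ε x₀ x ^ (q - 1) * PU ε x) Ω :=
      hint _ (cU.continuousOn.mul (hPUc ε hε))
    have e : ∫ x in Ω, (lam * PU ε x ^ (p - 1) + bubble p ε x₀ x ^ (q - 1)) * PU ε x =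
        ∫ x in Ω, (lam * |PU ε x| ^ p + bubble p ε x₀ x ^ (q - 1) * PU ε x) := by
      apply setIntegral_congr_fun hm
      intro x hx
      have h := hPUpos ε hε x hx
      simp only
      rw [abs_of_pos h, Real.rpow_sub_one h.ne']
      field_simp
    rw [h2, e, integral_add i1 i2, integral_const_mul]
    ring
  have hD : ∀ ε : ℝ, 0 < ε → ∫ x in Ω, |PU ε x| ^ q = ∫ x in Ω, PU ε x ^ q := by
    intro ε hε
    apply setIntegral_congr_fun hm
    intro x hx
    simp only
    rw [abs_of_pos (hPUpos ε hε x hx)]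
  have hQeq : ∀ ε : ℝ, 0 < ε → Qfun Ω p lam (PU ε) =
      (∫ x in Ω, bubble p ε x₀ x ^ (q - 1) * PU ε x) / (∫ x in Ω, PU ε x ^ q) ^ (p / q) := by
    intro ε hε
    unfold Qfun
    rw [(hEn ε hε).2, ← hqdef, hD ε hε]
  have hκ : p / q = (N - p) / N := by rw [hqdef]; field_simp
  have tpos : ∀ᶠ ε in 𝓝[>] (0:ℝ), 0 < ε ^ (p * a) := by
    filter_upwards [self_mem_nhdsWithin] with ε hε
    have hε : 0 < ε := hε
    positivity
  have ht0 : Tendsto (fun ε : ℝ => ε ^ (p * a)) (𝓝[>] 0) (𝓝 0) := pow_tendsto_zero (by positivity)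
  have hfin := final_asymp (κ := p / q) hA0 ht0 tpos t1 t2
  have k1 : A ^ (1 - p / q) = A ^ (p / N) := by
    congr 1; rw [hκ]; field_simp; ring
  have k2 : (A ^ (p / (N:ℝ))) ^ ((p - N) / p) = A ^ (-(p / q)) := by
    rw [← Real.rpow_mul hA0.le]; congr 1; rw [hκ]; field_simp; ring
  have k3 : p / q * q - 1 = p - 1 := by
    have : q ≠ 0 := by linarith
    field_simp
  rw [k1, k3] at hfin
  have key : Tendsto (fun ε : ℝ => (Qfun Ω p lam (PU ε) - (A ^ (p / N) - (p - 1) * (A ^ (p / (N:ℝ))) ^ ((p - N) / p) *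
      B * c * ε ^ ((N : ℝ) - p) * H x₀)) / ε ^ ((N : ℝ) - p)) (𝓝[>] 0) (𝓝 0) := by
    refine hfin.congr' ?_
    filter_upwards [self_mem_nhdsWithin] with ε hε
    rw [hQeq ε hε, k2, hpa]
    congr 2
    ring
  have hne0 : ∀ᶠ ε in 𝓝[>] (0:ℝ), ε ^ ((N:ℝ) - p) = 0 → Qfun Ω p lam (PU ε) - (A ^ (p / N) - (p - 1) * (A ^ (p / (N:ℝ))) ^ ((p - N) / p) *
      B * c * ε ^ ((N : ℝ) - p) * H x₀) = 0 := by
    filter_upwards [tpos] with ε hε h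
    rw [hpa] at hε
    exact absurd h hε.ne'
  refine ⟨(isLittleO_iff_tendsto' hne0).2 key, ?_⟩
  set K := (p - 1) * (A ^ (p / (N:ℝ))) ^ ((p - N) / p) * B * c * H x₀ with hK
  have hK0 : 0 < K := by positivity
  obtain ⟨ε, hε1, hε⟩ := ((key.eventually (gt_mem_nhds hK0)).and self_mem_nhdsWithin).exists
  have hε : 0 < ε := hε
  have htε : 0 < ε ^ ((N : ℝ) - p) := by positivity
  rw [div_lt_iff₀ htε] at hε1
  have hQ : Qfun Ω p lam (PU ε) < A ^ (p / (N:ℝ)) := by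
    rw [hK] at hε1; nlinarith
  refine Sfun_lt hp hpN hΩo hΩb (hPUreg ε hε) (hPUzero ε hε) (hPUpos ε hε) (hEn ε hε).1 ?_ hQ (by positivity)
  rw [← hqdef, hD ε hε]
  apply ne_of_gt
  have hi : IntegrableOn (fun x => PU ε x ^ q) Ω :=
    hint _ ((hPUc ε hε).rpow_const (fun x _ => Or.inr (by linarith)))
  rw [setIntegral_pos_iff_support_of_nonneg_ae _ hi]
  · have : Function.support (fun x => PU ε x ^ q) ∩ Ω = Ω := by
      apply Set.inter_eq_right.2
      intro x hx
      exact (Real.rpow_pos_of_pos (hPUpos ε hε x hx) q).ne'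
    rw [this]
    exact hΩo.measure_pos volume ⟨x₀, hx₀⟩
  · filter_upwards [ae_restrict_mem hm] with x hx
    exact (Real.rpow_pos_of_pos (hPUpos ε hε x hx) q).le

end
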